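/- arXiv:0704.0347 — 2 statements merged into one kernel-verified Lean document; each statement's English description precedes it below -/
import Mathlib

section
/- Let n ≥ 2 and 0 < θ < (n−1)/2. There exists a constant C > 0 such that for every τ > 0 and every Schwartz function f on ℝⁿ, ‖f̂‖_{L²(Σ(τ))} ≤ C τ^{θ} ‖⟨x⟩^{1/2+θ} f‖_{L²(ℝⁿ)}, where the constant C is independent of τ. -/
open MeasureTheory Real Complex RealInnerProductSpace

noncomputable section

/-- Fourier transform with convention `(2π)^(-n/2) ∫ e^(-ix·ξ) f(x) dx`. -/
def FT (n : ℕ) (f : EuclideanSpace ℝ (Fin n) → ℂ) (ξ : EuclideanSpace ℝ (Fin n)) : ℂ :=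
  ((2 * π) ^ (-(n : ℝ) / 2) : ℝ) •
    ∫ x : EuclideanSpace ℝ (Fin n), Complex.exp (-Complex.I * ((⟪x, ξ⟫ : ℝ) : ℂ)) * f x

/-- Inverse Fourier transform. -/
def IFT (n : ℕ) (F : EuclideanSpace ℝ (Fin n) → ℂ) (x : EuclideanSpace ℝ (Fin n)) : ℂ :=
  ((2 * π) ^ (-(n : ℝ) / 2) : ℝ) •
    ∫ ξ : EuclideanSpace ℝ (Fin n), Complex.exp (Complex.I * ((⟪x, ξ⟫ : ℝ) : ℂ)) * F ξ

/-- Fourier multiplier with symbol `q`: `q(D_x) f = IFT (q · FT f)`. -/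
def mult (n : ℕ) (q : EuclideanSpace ℝ (Fin n) → ℂ) (f : EuclideanSpace ℝ (Fin n) → ℂ) :
    EuclideanSpace ℝ (Fin n) → ℂ :=
  IFT n fun ξ => q ξ * FT n f ξ

/-!
By duality, the trace estimate is equivalent to `∫ |x|^(-2p) |E g|² dx ≤ C τ^(2θ) ‖g‖²` for the
extension operator `E g (x) = ∫ e^(-ix·ξ) g(ξ) dσ(ξ)`, where `σ` is the surface measure of
`{a = τ}` and `p = 1/2 + θ`. Writing `|x|^(-2p)` as a superposition of Gaussians turns the
left-hand side into the Riesz energy `c ∬ g(ξ) conj(g(ζ)) |ξ - ζ|^(-β) dσ dσ` with `β = n - 2p`,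
and Schur's test reduces its boundedness to `∫ |ξ - ζ|^(-β) dσ(ζ) ≤ C τ^(2θ)`. Since
`n - 1 - β = 2θ > 0`, this follows from `σ(B(ξ, r)) ≤ K min(r, τ)^(n-1)` by the layer-cake formula.
Such a bound holds for the faces of a cube, hence for `{a = 1}`, its bi-Lipschitz image under
radial projection, and for `{a = τ}` by dilation.
-/

open Filter Metric Module Set
open scoped ENNReal NNReal Pointwise Topology

/-! ### Upper Ahlfors regular sets -/

/-- `S` is upper Ahlfors `s`-regular with constant `K`: its `s`-dimensional Hausdorff measure is
at most `K` times the `s`-th power of the diameter, on every subset of `S`. Testing on arbitrary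
subsets rather than on balls makes the notion transfer along bi-Lipschitz maps. -/
def IsUpperAhlforsRegular {X : Type*} [EMetricSpace X] [MeasurableSpace X] [BorelSpace X]
    (s : ℝ) (K : ℝ≥0) (S : Set X) : Prop :=
  ∀ E ⊆ S, μH[s] E ≤ K * ediam E ^ s

namespace IsUpperAhlforsRegular

section EMetric

variable {X Y : Type*} [EMetricSpace X] [MeasurableSpace X] [BorelSpace X]
  [EMetricSpace Y] [MeasurableSpace Y] [BorelSpace Y] {s : ℝ} {K : ℝ≥0} {S T : Set X}

lemma mono (hS : IsUpperAhlforsRegular s K S) (hTS : T ⊆ S) : IsUpperAhlforsRegular s K T :=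
  fun E hE ↦ hS E (hE.trans hTS)

lemma iUnion {ι : Type*} [Fintype ι] {S : ι → Set X} {K : ι → ℝ≥0} (hs : 0 ≤ s)
    (hS : ∀ i, IsUpperAhlforsRegular s (K i) (S i)) :
    IsUpperAhlforsRegular s (∑ i, K i) (⋃ i, S i) := by
  intro E hE
  calc μH[s] E = μH[s] (⋃ i, E ∩ S i) := by rw [← inter_iUnion, inter_eq_left.mpr hE]
    _ ≤ ∑ i, μH[s] (E ∩ S i) := measure_iUnion_fintype_le _ _
    _ ≤ ∑ i, (K i : ℝ≥0∞) * ediam E ^ s := by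
        gcongr with i
        exact (hS i _ inter_subset_right).trans (by gcongr; exact inter_subset_left)
    _ = (∑ i, K i : ℝ≥0) * ediam E ^ s := by rw [← Finset.sum_mul, ENNReal.ofNNReal_finsetSum]

lemma of_lipschitzOnWith (hs : 0 ≤ s) (hS : IsUpperAhlforsRegular s K S) {T : Set Y}
    {φ : X → Y} {ψ : Y → X} {L L' : ℝ≥0} (hφ : LipschitzOnWith L φ S) (hψ : LipschitzOnWith L' ψ T)
    (hψTS : MapsTo ψ T S) (hφψ : LeftInvOn φ ψ T) :
    IsUpperAhlforsRegular s (L ^ s * K * L' ^ s) T := by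
  intro E hE
  have hψE : ψ '' E ⊆ S := (hψTS.mono_left hE).image_subset
  have hdiam : ediam (ψ '' E) ≤ L' * ediam E := by
    simpa using (hψ.mono hE).holderOnWith.ediam_image_le
  calc μH[s] E = μH[s] (φ '' (ψ '' E)) := by rw [(hφψ.mono hE).image_image]
    _ ≤ (L : ℝ≥0∞) ^ s * μH[s] (ψ '' E) := (hφ.mono hψE).hausdorffMeasure_image_le hs
    _ ≤ (L : ℝ≥0∞) ^ s * (K * (L' * ediam E) ^ s) := by
        gcongr
        exact (hS _ hψE).trans (by gcongr)
    _ = (L ^ s * K * L' ^ s : ℝ≥0) * ediam E ^ s := by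
        simp only [ENNReal.mul_rpow_of_nonneg _ _ hs, ENNReal.coe_mul,
          ENNReal.coe_rpow_of_nonneg _ hs, mul_assoc]

end EMetric

lemma smul {V : Type*} [NormedAddCommGroup V] [NormedSpace ℝ V] [MeasurableSpace V]
    [BorelSpace V] {s : ℝ} {K : ℝ≥0} {S : Set V} (hs : 0 ≤ s)
    (hS : IsUpperAhlforsRegular s K S) {τ : ℝ} (hτ : τ ≠ 0) :
    IsUpperAhlforsRegular s K (τ • S) := by
  intro E hE
  obtain ⟨F, hFS, rfl⟩ : ∃ F ⊆ S, τ • F = E := subset_image_iff.mp hE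
  have hτ' : (‖τ‖₊ : ℝ≥0∞) ^ s = (‖τ‖₊ ^ s : ℝ≥0) := ENNReal.coe_rpow_of_nonneg _ hs |>.symm
  rw [Measure.hausdorffMeasure_smul₀ hs hτ, ediam_smul₀, ENNReal.smul_def, ENNReal.smul_def,
    smul_eq_mul, smul_eq_mul, ENNReal.mul_rpow_of_nonneg _ _ hs, hτ', mul_left_comm]
  gcongr
  exact hS F hFS

end IsUpperAhlforsRegular

lemma isUpperAhlforsRegular_univ_pi (ι : Type*) [Fintype ι] :
    IsUpperAhlforsRegular (Fintype.card ι) 1 (univ : Set (ι → ℝ)) := by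
  intro E _
  simpa [hausdorffMeasure_pi_real] using Real.volume_pi_le_diam_pow E

lemma isUpperAhlforsRegular_hyperplane_pi {m : ℕ} (i : Fin (m + 1)) (c : ℝ) :
    IsUpperAhlforsRegular m 1 {y : Fin (m + 1) → ℝ | y i = c} := by
  have hinsert : LipschitzWith 1 (fun z : Fin m → ℝ ↦ i.insertNth (α := fun _ ↦ ℝ) c z) :=
    LipschitzWith.of_dist_le_mul fun z w ↦ by simp [Fin.dist_insertNth_insertNth]
  have hremove : LipschitzWith 1 (fun y : Fin (m + 1) → ℝ ↦ i.removeNth y) :=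
    LipschitzWith.of_dist_le_mul fun y w ↦ by
      simpa using! (dist_pi_le_iff dist_nonneg).mpr fun j ↦ dist_le_pi_dist y w (i.succAbove j)
  have hinv : LeftInvOn (fun z : Fin m → ℝ ↦ i.insertNth (α := fun _ ↦ ℝ) c z) i.removeNth
      {y | y i = c} := by
    rintro y rfl
    exact i.insertNth_self_removeNth y
  simpa using (isUpperAhlforsRegular_univ_pi (Fin m)).of_lipschitzOnWith (by positivity)
    hinsert.lipschitzOnWith hremove.lipschitzOnWith (mapsTo_univ _ _) hinv

lemma sphere_pi_subset_iUnion_hyperplane (m : ℕ) :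
    sphere (0 : Fin (m + 1) → ℝ) 1 ⊆ ⋃ k : Fin (m + 1) × ℤˣ, {y | y k.1 = (k.2 : ℤ)} := by
  rw [sphere_pi 0 (.inl one_pos)]
  rintro y ⟨hy, -⟩
  obtain ⟨i, hi⟩ := mem_iUnion.mp hy
  rcases eq_or_eq_neg_of_abs_eq (by simpa using hi : |y i| = 1) with h | h
  · exact mem_iUnion.mpr ⟨(i, 1), by simp [h]⟩
  · exact mem_iUnion.mpr ⟨(i, -1), by simp [h]⟩

lemma exists_isUpperAhlforsRegular_sphere_pi (m : ℕ) :
    ∃ K, IsUpperAhlforsRegular m K (sphere (0 : Fin (m + 1) → ℝ) 1) :=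
  ⟨_, (IsUpperAhlforsRegular.iUnion m.cast_nonneg fun k : Fin (m + 1) × ℤˣ ↦
    isUpperAhlforsRegular_hyperplane_pi k.1 (k.2 : ℤ)).mono (sphere_pi_subset_iUnion_hyperplane m)⟩

/-! ### Unit level sets of homogeneous functions -/

/-- Positively homogeneous functions of degree one, positive and locally Lipschitz away from the
origin. The level sets `{a = τ}` are the dilates of a Lipschitz star-shaped hypersurface. -/
structure IsLipschitzGauge {V : Type*} [NormedAddCommGroup V] [NormedSpace ℝ V] (a : V → ℝ) :
    Prop where
  locallyLipschitzOn : LocallyLipschitzOn {0}ᶜ a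
  map_smul : ∀ t : ℝ, 0 < t → ∀ ξ, a (t • ξ) = t * a ξ
  pos : ∀ ξ ≠ 0, 0 < a ξ

lemma isLipschitzGauge_norm_comp {V W : Type*} [NormedAddCommGroup V] [NormedSpace ℝ V]
    [NormedAddCommGroup W] [NormedSpace ℝ W] (e : V →L[ℝ] W) (he : Function.Injective e) :
    IsLipschitzGauge (fun ξ ↦ ‖e ξ‖) where
  locallyLipschitzOn :=
    (lipschitzWith_one_norm.comp e.lipschitz).locallyLipschitz.locallyLipschitzOn
  map_smul t ht ξ := by rw [map_smul, norm_smul, norm_of_nonneg ht.le]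
  pos ξ hξ := norm_pos_iff.mpr ((map_ne_zero_iff e he).mpr hξ)

lemma exists_lipschitzOnWith_inv_smul_of_le {V : Type*} [NormedAddCommGroup V] [NormedSpace ℝ V]
    {g : V → ℝ} {S : Set V} {L : ℝ≥0} {c R : ℝ} (hg : LipschitzOnWith L g S) (hc : 0 < c)
    (hcg : ∀ ξ ∈ S, c ≤ g ξ) (hR : ∀ ξ ∈ S, ‖ξ‖ ≤ R) :
    ∃ L', LipschitzOnWith L' (fun ξ ↦ (g ξ)⁻¹ • ξ) S := by
  refine ⟨_, LipschitzOnWith.of_dist_le' (K := c⁻¹ + L * c⁻¹ * c⁻¹ * R) fun ξ hξ ζ hζ ↦ ?_⟩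
  have hgξ : 0 < g ξ := hc.trans_le (hcg ξ hξ)
  have hgζ : 0 < g ζ := hc.trans_le (hcg ζ hζ)
  have hinv : dist (g ξ)⁻¹ (g ζ)⁻¹ ≤ L * dist ξ ζ * c⁻¹ * c⁻¹ := by
    rw [dist_inv_inv₀ hgξ.ne' hgζ.ne', norm_of_nonneg hgξ.le, norm_of_nonneg hgζ.le, div_eq_mul_inv,
      mul_inv, ← mul_assoc]
    gcongr
    exacts [hg.dist_le_mul ξ hξ ζ hζ, hcg ξ hξ, hcg ζ hζ]
  calc dist ((g ξ)⁻¹ • ξ) ((g ζ)⁻¹ • ζ)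
      ≤ dist ((g ξ)⁻¹ • ξ) ((g ξ)⁻¹ • ζ) + dist ((g ξ)⁻¹ • ζ) ((g ζ)⁻¹ • ζ) := dist_triangle _ _ _
    _ = (g ξ)⁻¹ * dist ξ ζ + dist (g ξ)⁻¹ (g ζ)⁻¹ * ‖ζ‖ := by
        rw [dist_smul₀, norm_of_nonneg (inv_nonneg.mpr hgξ.le), dist_eq_norm ((g ξ)⁻¹ • ζ),
          ← sub_smul, norm_smul, dist_eq_norm (g ξ)⁻¹]
    _ ≤ c⁻¹ * dist ξ ζ + L * dist ξ ζ * c⁻¹ * c⁻¹ * R := by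
        gcongr
        exacts [hcg ξ hξ, hR ζ hζ]
    _ = (c⁻¹ + L * c⁻¹ * c⁻¹ * R) * dist ξ ζ := by ring

namespace IsLipschitzGauge

variable {V : Type*} [NormedAddCommGroup V] [NormedSpace ℝ V] {a b : V → ℝ}

lemma map_zero (ha : IsLipschitzGauge a) : a 0 = 0 := by
  have := ha.map_smul 2 two_pos 0
  rw [smul_zero] at this
  linarith

lemma ne_zero_of_eq_one (ha : IsLipschitzGauge a) {ξ : V} (hξ : a ξ = 1) : ξ ≠ 0 := by
  rintro rfl
  exact zero_ne_one (ha.map_zero.symm.trans hξ)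

lemma map_inv_smul_self (ha : IsLipschitzGauge a) {ξ : V} (hξ : ξ ≠ 0) : a ((a ξ)⁻¹ • ξ) = 1 := by
  rw [ha.map_smul _ (inv_pos.mpr (ha.pos ξ hξ)), inv_mul_cancel₀ (ha.pos ξ hξ).ne']

lemma inv_smul_inv_smul_self (ha : IsLipschitzGauge a) (hb : IsLipschitzGauge b) {ξ : V}
    (hξ : b ξ = 1) : (b ((a ξ)⁻¹ • ξ))⁻¹ • (a ξ)⁻¹ • ξ = ξ := by
  have haξ := ha.pos ξ (hb.ne_zero_of_eq_one hξ)
  rw [hb.map_smul _ (inv_pos.mpr haξ), hξ, mul_one, inv_inv, smul_inv_smul₀ haξ.ne']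

lemma setOf_eq_smul (ha : IsLipschitzGauge a) {τ : ℝ} (hτ : 0 < τ) :
    {ξ | a ξ = τ} = τ • {ξ | a ξ = 1} := by
  ext ξ
  rw [mem_smul_set_iff_inv_smul_mem₀ hτ.ne', mem_ofPred_eq, mem_ofPred_eq,
    ha.map_smul _ (inv_pos.mpr hτ), inv_mul_eq_one₀ hτ.ne', eq_comm]

section FiniteDimensional

variable [FiniteDimensional ℝ V]

lemma exists_norm_bounds (ha : IsLipschitzGauge a) :
    ∃ c C : ℝ, 0 < c ∧ 0 < C ∧ ∀ ξ, c * ‖ξ‖ ≤ a ξ ∧ a ξ ≤ C * ‖ξ‖ := by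
  have hsphere : ∀ ξ ∈ sphere (0 : V) 1, ξ ≠ 0 := fun ξ hξ ↦ ne_of_mem_sphere hξ one_ne_zero
  have hcont : ContinuousOn a (sphere 0 1) := ha.locallyLipschitzOn.continuousOn.mono hsphere
  obtain ⟨c, hc, hca⟩ := (isCompact_sphere (0 : V) 1).exists_forall_le' hcont
    fun ξ hξ ↦ ha.pos ξ (hsphere ξ hξ)
  obtain ⟨C, hC⟩ := (isCompact_sphere (0 : V) 1).exists_bound_of_continuousOn hcont
  refine ⟨c, max C 1, hc, by positivity, fun ξ ↦ ?_⟩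
  rcases eq_or_ne ξ 0 with rfl | hξ
  · simp [ha.map_zero]
  · have hξ₁ : ‖ξ‖⁻¹ • ξ ∈ sphere (0 : V) 1 := by simp [norm_smul, hξ]
    have haξ : a ξ = a (‖ξ‖⁻¹ • ξ) * ‖ξ‖ := by
      rw [ha.map_smul _ (by positivity)]
      field_simp
    rw [haξ]
    constructor
    · gcongr
      exact hca _ hξ₁
    · gcongr
      exact (le_abs_self _).trans ((hC _ hξ₁).trans (le_max_left _ _))

lemma exists_norm_mem_Icc_of_eq_one (ha : IsLipschitzGauge a) :
    ∃ r R : ℝ, 0 < r ∧ ∀ ξ, a ξ = 1 → r ≤ ‖ξ‖ ∧ ‖ξ‖ ≤ R := by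
  obtain ⟨c, C, hc, hC, hcC⟩ := ha.exists_norm_bounds
  refine ⟨C⁻¹, c⁻¹, by positivity, fun ξ hξ ↦ ?_⟩
  obtain ⟨hlower, hupper⟩ := hξ ▸ hcC ξ
  exact ⟨(inv_le_iff_one_le_mul₀' hC).mpr hupper, by rwa [← one_div, le_div_iff₀' hc]⟩

lemma isBounded_setOf_eq_one (ha : IsLipschitzGauge a) : Bornology.IsBounded {ξ | a ξ = 1} := by
  obtain ⟨_, R, _, hR⟩ := ha.exists_norm_mem_Icc_of_eq_one
  exact isBounded_iff_forall_norm_le.mpr ⟨R, fun ξ hξ ↦ (hR ξ hξ).2⟩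

lemma exists_lipschitzOnWith_inv_smul (ha : IsLipschitzGauge a) (hb : IsLipschitzGauge b) :
    ∃ L, LipschitzOnWith L (fun ξ ↦ (a ξ)⁻¹ • ξ) {ξ | b ξ = 1} := by
  obtain ⟨c, _, hc, _, hca⟩ := ha.exists_norm_bounds
  obtain ⟨r, R, hr, hrR⟩ := hb.exists_norm_mem_Icc_of_eq_one
  have hannulus : closedBall (0 : V) R \ ball 0 r ⊆ {0}ᶜ := by
    rintro _ ⟨-, hξ⟩ rfl
    exact hξ (mem_ball_self hr)
  obtain ⟨L, hL⟩ := (ha.locallyLipschitzOn.mono hannulus).exists_lipschitzOnWith_of_compact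
    ((isCompact_closedBall 0 R).diff isOpen_ball)
  have hsub : {ξ | b ξ = 1} ⊆ closedBall (0 : V) R \ ball 0 r := fun ξ hξ ↦ by
    simpa [and_comm] using hrR ξ hξ
  refine exists_lipschitzOnWith_inv_smul_of_le (hL.mono hsub) (mul_pos hc hr) (fun ξ hξ ↦ ?_)
    fun ξ hξ ↦ (hrR ξ hξ).2
  exact (mul_le_mul_of_nonneg_left (hrR ξ hξ).1 hc.le).trans (hca ξ).1

lemma exists_isUpperAhlforsRegular_of_setOf_eq_one [MeasurableSpace V] [BorelSpace V]
    (ha : IsLipschitzGauge a) (hb : IsLipschitzGauge b) {s : ℝ} (hs : 0 ≤ s) {K : ℝ≥0}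
    (hreg : IsUpperAhlforsRegular s K {ξ | b ξ = 1}) :
    ∃ K', IsUpperAhlforsRegular s K' {ξ | a ξ = 1} := by
  obtain ⟨L, hL⟩ := exists_lipschitzOnWith_inv_smul ha hb
  obtain ⟨L', hL'⟩ := exists_lipschitzOnWith_inv_smul hb ha
  exact ⟨_, hreg.of_lipschitzOnWith hs hL hL'
    (fun ξ hξ ↦ hb.map_inv_smul_self (ha.ne_zero_of_eq_one hξ))
    (fun ξ hξ ↦ inv_smul_inv_smul_self hb ha hξ)⟩

lemma exists_isUpperAhlforsRegular_setOf_eq_one [MeasurableSpace V] [BorelSpace V]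
    (ha : IsLipschitzGauge a) {m : ℕ} (hm : finrank ℝ V = m + 1) :
    ∃ K, IsUpperAhlforsRegular m K {ξ | a ξ = 1} := by
  have e : V ≃L[ℝ] (Fin (m + 1) → ℝ) := ContinuousLinearEquiv.ofFinrankEq (by simp [hm])
  obtain ⟨K, hK⟩ := exists_isUpperAhlforsRegular_sphere_pi m
  have hpre : IsUpperAhlforsRegular m _ {ξ | ‖e ξ‖ = 1} :=
    hK.of_lipschitzOnWith m.cast_nonneg e.symm.lipschitz.lipschitzOnWith
      e.lipschitz.lipschitzOnWith (fun ξ hξ ↦ by simpa using hξ) (fun ξ _ ↦ e.symm_apply_apply ξ)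
  have he : IsLipschitzGauge (fun ξ ↦ ‖e ξ‖) :=
    isLipschitzGauge_norm_comp e.toContinuousLinearMap e.injective
  exact ha.exists_isUpperAhlforsRegular_of_setOf_eq_one he m.cast_nonneg hpre

end FiniteDimensional

end IsLipschitzGauge

/-! ### Frostman measures -/

/-- A Frostman condition of dimension `s` below the scale `τ`: balls of radius `r` have mass at
most `K * min r τ ^ s`, as for the surface measure of an `s`-dimensional hypersurface of
diameter `τ`. -/
def IsFrostman {X : Type*} [PseudoMetricSpace X] [MeasurableSpace X] (σ : Measure X) (K : ℝ≥0)
    (s τ : ℝ) : Prop :=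
  ∀ x r, 0 < r → σ (closedBall x r) ≤ K * ENNReal.ofReal (min r τ ^ s)

namespace IsUpperAhlforsRegular

lemma exists_isFrostman_smul {V : Type*} [NormedAddCommGroup V] [NormedSpace ℝ V]
    [MeasurableSpace V] [BorelSpace V] {s : ℝ} {K : ℝ≥0} {S : Set V} (hs : 0 ≤ s)
    (hS : IsUpperAhlforsRegular s K S) (hbdd : Bornology.IsBounded S) :
    ∃ K', ∀ τ : ℝ, 0 < τ → IsFrostman (μH[s].restrict (τ • S)) K' s τ := by
  set D : ℝ := max 2 (diam S)
  have hD : 0 < D := two_pos.trans_le (le_max_left _ _)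
  refine ⟨K * D.toNNReal ^ s, fun τ hτ x r hr ↦ ?_⟩
  have hdiam : ediam (closedBall x r ∩ τ • S) ≤ ENNReal.ofReal (D * min r τ) := by
    refine ediam_le_of_forall_dist_le ?_
    rintro _ ⟨hξ, ξ, hξS, rfl⟩ _ ⟨hζ, ζ, hζS, rfl⟩
    rw [mul_min_of_nonneg _ _ hD.le]
    refine le_min ?_ ?_
    · calc dist (τ • ξ) (τ • ζ) ≤ r + r := dist_triangle_right _ _ x |>.trans (add_le_add hξ hζ)
        _ = 2 * r := (two_mul r).symm
        _ ≤ D * r := by gcongr; exact le_max_left _ _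
    · calc dist (τ • ξ) (τ • ζ) = τ * dist ξ ζ := by rw [dist_smul₀, norm_of_nonneg hτ.le]
        _ ≤ τ * diam S := by gcongr; exact dist_le_diam_of_mem hbdd hξS hζS
        _ ≤ D * τ := by rw [mul_comm]; gcongr; exact le_max_right _ _
  calc μH[s].restrict (τ • S) (closedBall x r)
      = μH[s] (closedBall x r ∩ τ • S) := Measure.restrict_apply measurableSet_closedBall
    _ ≤ K * ediam (closedBall x r ∩ τ • S) ^ s := hS.smul hs hτ.ne' _ inter_subset_right
    _ ≤ K * ENNReal.ofReal (D * min r τ) ^ s := by gcongr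
    _ = (K * D.toNNReal ^ s : ℝ≥0) * ENNReal.ofReal (min r τ ^ s) := by
        rw [ENNReal.ofReal_mul hD.le, ENNReal.mul_rpow_of_nonneg _ _ hs,
          ENNReal.ofReal_rpow_of_nonneg (le_min hr.le hτ.le) hs, ENNReal.coe_mul,
          ENNReal.coe_rpow_of_nonneg _ hs, ← mul_assoc]
        rfl

end IsUpperAhlforsRegular

lemma lintegral_Ioc_rpow_sub_one {q b : ℝ} (hq : 0 < q) (hb : 0 < b) :
    ∫⁻ t in Ioc 0 b, ENNReal.ofReal (t ^ (q - 1)) = ENNReal.ofReal (b ^ q / q) := by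
  have hint : IntervalIntegrable (fun t : ℝ ↦ t ^ (q - 1)) volume 0 b :=
    intervalIntegral.intervalIntegrable_rpow' (by linarith)
  rw [← ofReal_integral_eq_lintegral_ofReal hint.1
    (ae_restrict_of_forall_mem measurableSet_Ioc fun t ht ↦ rpow_nonneg ht.1.le _),
    ← intervalIntegral.integral_of_le hb.le, integral_rpow (.inl (by linarith)),
    sub_add_cancel, zero_rpow hq.ne', sub_zero]

lemma lintegral_Ioi_rpow_neg_sub_one {q b : ℝ} (hq : 0 < q) (hb : 0 < b) :
    ∫⁻ t in Ioi b, ENNReal.ofReal (t ^ (-q - 1)) = ENNReal.ofReal (b ^ (-q) / q) := by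
  have hq' : -q - 1 < -1 := by linarith
  rw [← ofReal_integral_eq_lintegral_ofReal (integrableOn_Ioi_rpow_of_lt hq' hb)
    (ae_restrict_of_forall_mem measurableSet_Ioi fun t ht ↦ rpow_nonneg (hb.trans ht).le _),
    integral_Ioi_rpow_of_lt hq' hb, sub_add_cancel, neg_div_neg_eq]

lemma lintegral_min_inv_rpow_mul_rpow {s β τ : ℝ} (hβ : 0 < β) (hβs : β < s) (hτ : 0 < τ) :
    ∫⁻ t in Ioi 0, ENNReal.ofReal (min t⁻¹ τ ^ s) * ENNReal.ofReal (t ^ (β - 1)) =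
      ENNReal.ofReal (τ ^ (s - β) * (β⁻¹ + (s - β)⁻¹)) := by
  have hτinv : 0 < τ⁻¹ := inv_pos.mpr hτ
  have hsmall : ∀ t ∈ Ioc 0 τ⁻¹, ENNReal.ofReal (min t⁻¹ τ ^ s) * ENNReal.ofReal (t ^ (β - 1)) =
      ENNReal.ofReal (τ ^ s) * ENNReal.ofReal (t ^ (β - 1)) := fun t ht ↦ by
    rw [min_eq_right ((le_inv_comm₀ ht.1 hτ).mp ht.2)]
  have hlarge : ∀ t ∈ Ioi τ⁻¹, ENNReal.ofReal (min t⁻¹ τ ^ s) * ENNReal.ofReal (t ^ (β - 1)) =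
      ENNReal.ofReal (t ^ (-(s - β) - 1)) := fun t ht ↦ by
    have ht₀ : 0 < t := hτinv.trans ht
    rw [min_eq_left ((inv_lt_comm₀ hτ ht₀).mp ht).le, ← ENNReal.ofReal_mul (by positivity),
      inv_rpow ht₀.le, ← rpow_neg ht₀.le, ← rpow_add ht₀]
    ring_nf
  rw [← Ioc_union_Ioi_eq_Ioi hτinv.le, lintegral_union measurableSet_Ioi Ioc_disjoint_Ioi_same,
    setLIntegral_congr_fun measurableSet_Ioc hsmall,
    setLIntegral_congr_fun measurableSet_Ioi hlarge,
    lintegral_const_mul' _ _ ENNReal.ofReal_ne_top, lintegral_Ioc_rpow_sub_one hβ hτinv,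
    lintegral_Ioi_rpow_neg_sub_one (sub_pos.mpr hβs) hτinv, ← ENNReal.ofReal_mul (by positivity),
    ← ENNReal.ofReal_add (by positivity) (by have := sub_pos.mpr hβs; positivity)]
  congr 1
  rw [inv_rpow hτ.le, inv_rpow hτ.le, rpow_neg hτ.le, inv_inv, rpow_sub hτ]
  ring

namespace IsFrostman

variable {X : Type*} [PseudoMetricSpace X] [MeasurableSpace X] {σ : Measure X} {K : ℝ≥0} {s τ : ℝ}

lemma measure_univ_le (hσ : IsFrostman σ K s τ) (hτ : 0 < τ) :
    σ univ ≤ K * ENNReal.ofReal (τ ^ s) := by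
  rcases isEmpty_or_nonempty X with hX | ⟨⟨x⟩⟩
  · simp [univ_eq_empty_iff.mpr hX]
  · have hmono : Monotone fun n : ℕ ↦ closedBall x (n : ℝ) := fun m n hmn ↦
      closedBall_subset_closedBall (mod_cast hmn)
    rw [← iUnion_closedBall_nat x, hmono.measure_iUnion]
    refine iSup_le fun n ↦ ?_
    calc σ (closedBall x n) ≤ σ (closedBall x (max n τ)) := by gcongr; exact le_max_left _ _
      _ ≤ K * ENNReal.ofReal (τ ^ s) := by
        simpa using hσ x (max n τ) (hτ.trans_le (le_max_right _ _))

lemma isFiniteMeasure (hσ : IsFrostman σ K s τ) (hτ : 0 < τ) : IsFiniteMeasure σ :=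
  ⟨(hσ.measure_univ_le hτ).trans_lt (ENNReal.mul_lt_top ENNReal.coe_lt_top ENNReal.ofReal_lt_top)⟩

lemma nullSingletonClass (hσ : IsFrostman σ K s τ) (hs : 0 < s) (hτ : 0 < τ) :
    NullSingletonClass σ := by
  refine ⟨fun x ↦ nonpos_iff_eq_zero.mp ?_⟩
  have hlim : Tendsto (fun r ↦ K * ENNReal.ofReal (r ^ s)) (𝓝[>] 0) (𝓝 0) := by
    have hcont : Continuous fun r : ℝ ↦ K * ENNReal.ofReal (r ^ s) :=
      ENNReal.continuous_const_mul ENNReal.coe_ne_top |>.comp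
        (ENNReal.continuous_ofReal.comp (continuous_rpow_const hs.le))
    refine (hcont.tendsto' 0 0 ?_).mono_left nhdsWithin_le_nhds
    simp [zero_rpow hs.ne']
  refine ge_of_tendsto hlim (eventually_mem_nhdsWithin.mono fun r (hr : 0 < r) ↦ ?_)
  calc σ {x} ≤ σ (closedBall x r) := by gcongr; simpa using hr.le
    _ ≤ K * ENNReal.ofReal (min r τ ^ s) := hσ x r hr
    _ ≤ K * ENNReal.ofReal (r ^ s) := by
        gcongr
        exact min_le_left _ _

lemma lintegral_edist_rpow_neg_le {X : Type*} [MetricSpace X] [MeasurableSpace X]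
    [OpensMeasurableSpace X] {σ : Measure X} (hσ : IsFrostman σ K s τ) (hτ : 0 < τ) {β : ℝ}
    (hβ : 0 < β) (hβs : β < s) (x : X) :
    ∫⁻ y, edist x y ^ (-β) ∂σ ≤ K * ENNReal.ofReal (s / (s - β) * τ ^ (s - β)) := by
  have := hσ.nullSingletonClass (hβ.trans hβs) hτ
  have hoffdiag : ∀ᵐ y ∂σ, edist x y ^ (-β) = ENNReal.ofReal ((dist x y)⁻¹ ^ β) := by
    filter_upwards [compl_mem_ae_iff.mpr (measure_singleton x)] with y hy
    have hxy : 0 < dist x y := dist_pos.mpr (Ne.symm hy)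
    rw [edist_dist, ENNReal.ofReal_rpow_of_pos hxy, rpow_neg_eq_inv_rpow]
  have hlevel : ∀ t ∈ Ioi (0 : ℝ), σ {y | t ≤ (dist x y)⁻¹} * ENNReal.ofReal (t ^ (β - 1)) ≤
      K * (ENNReal.ofReal (min t⁻¹ τ ^ s) * ENNReal.ofReal (t ^ (β - 1))) := fun t ht ↦ by
    rw [← mul_assoc]
    gcongr
    refine (measure_mono fun y hy ↦ ?_).trans (hσ x t⁻¹ (inv_pos.mpr ht))
    exact mem_closedBall'.mpr (le_inv_of_le_inv₀ ht hy)
  calc ∫⁻ y, edist x y ^ (-β) ∂σ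
      = ENNReal.ofReal β *
          ∫⁻ t in Ioi 0, σ {y | t ≤ (dist x y)⁻¹} * ENNReal.ofReal (t ^ (β - 1)) := by
        rw [lintegral_congr_ae hoffdiag, lintegral_rpow_eq_lintegral_meas_le_mul σ
          (.of_forall fun y ↦ inv_nonneg.mpr dist_nonneg) (by fun_prop) hβ]
    _ ≤ ENNReal.ofReal β * (K * ENNReal.ofReal (τ ^ (s - β) * (β⁻¹ + (s - β)⁻¹))) := by
        gcongr
        rw [← lintegral_min_inv_rpow_mul_rpow hβ hβs hτ,
          ← lintegral_const_mul' _ _ ENNReal.coe_ne_top]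
        exact setLIntegral_mono' measurableSet_Ioi hlevel
    _ = K * ENNReal.ofReal (s / (s - β) * τ ^ (s - β)) := by
        rw [mul_left_comm, ← ENNReal.ofReal_mul hβ.le]
        have : s - β ≠ 0 := (sub_pos.mpr hβs).ne'
        congr 2
        field_simp
        ring

end IsFrostman

/-! ### Riesz kernels as superpositions of Gaussians -/

lemma lintegral_rpow_mul_exp_neg_mul {q r : ℝ} (hq : 0 < q) (hr : 0 < r) :
    ∫⁻ t in Ioi 0, ENNReal.ofReal (t ^ (q - 1) * rexp (-(r * t))) =
      ENNReal.ofReal (Real.Gamma q * r ^ (-q)) := by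
  have hval : ∫ t in Ioi 0, t ^ (q - 1) * rexp (-(r * t)) = Real.Gamma q * r ^ (-q) := by
    rw [integral_rpow_mul_exp_neg_mul_Ioi hq hr, one_div, inv_rpow hr.le, rpow_neg hr.le, mul_comm]
  have hpos : 0 < Real.Gamma q * r ^ (-q) :=
    mul_pos (Real.Gamma_pos_of_pos hq) (rpow_pos_of_pos hr _)
  rw [← hval, ofReal_integral_eq_lintegral_ofReal (.of_integral_ne_zero (hval ▸ hpos.ne'))]
  refine ae_restrict_of_forall_mem measurableSet_Ioi fun t (ht : 0 < t) ↦ ?_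
  positivity

lemma lintegral_rpow_mul_exp_neg_div {q r : ℝ} (hq : 0 < q) (hr : 0 < r) :
    ∫⁻ t in Ioi 0, ENNReal.ofReal (t ^ (-q - 1) * rexp (-(r / t))) =
      ENNReal.ofReal (Real.Gamma q * r ^ (-q)) := by
  have hval : ∫ t in Ioi 0, t ^ (-q - 1) * rexp (-(r / t)) = Real.Gamma q * r ^ (-q) := by
    have hsubst : ∀ t ∈ Ioi (0 : ℝ), t ^ (-q - 1) * rexp (-(r / t)) =
        (|(-1 : ℝ)| * t ^ (-1 - 1 : ℝ)) • ((t ^ (-1 : ℝ)) ^ (q - 1) * rexp (-(r * t ^ (-1 : ℝ)))) :=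
      fun t (ht : 0 < t) ↦ by
        rw [abs_neg, abs_one, one_mul, smul_eq_mul, ← mul_assoc, ← rpow_mul ht.le, ← rpow_add ht,
          rpow_neg_one, div_eq_mul_inv]
        ring_nf
    rw [setIntegral_congr_fun measurableSet_Ioi hsubst,
      integral_comp_rpow_Ioi (fun t ↦ t ^ (q - 1) * rexp (-(r * t))) (neg_ne_zero.mpr one_ne_zero),
      integral_rpow_mul_exp_neg_mul_Ioi hq hr, one_div, inv_rpow hr.le, rpow_neg hr.le, mul_comm]
  have hpos : 0 < Real.Gamma q * r ^ (-q) :=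
    mul_pos (Real.Gamma_pos_of_pos hq) (rpow_pos_of_pos hr _)
  rw [← hval, ofReal_integral_eq_lintegral_ofReal (.of_integral_ne_zero (hval ▸ hpos.ne'))]
  refine ae_restrict_of_forall_mem measurableSet_Ioi fun t (ht : 0 < t) ↦ ?_
  positivity

/-- The constant `c` for which the Fourier transform of `‖x‖ ^ (β - d)` on a space of dimension `d`
is `c * ‖ξ‖ ^ (-β)`, in the convention of `angularFourier`. -/
def rieszConstant (d β : ℝ) : ℝ :=
  π ^ (d / 2) * 2 ^ β * Real.Gamma (β / 2) / Real.Gamma ((d - β) / 2)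

lemma rieszConstant_pos {d β : ℝ} (hβ : 0 < β) (hβd : β < d) : 0 < rieszConstant d β := by
  have := Real.Gamma_pos_of_pos (half_pos hβ)
  have := Real.Gamma_pos_of_pos (half_pos (sub_pos.mpr hβd))
  unfold rieszConstant
  positivity

lemma gamma_mul_enorm_rpow_neg_eq_lintegral {V : Type*} [NormedAddCommGroup V] {q : ℝ}
    (hq : 0 < q) {x : V} (hx : x ≠ 0) :
    ENNReal.ofReal (Real.Gamma q) * ‖x‖ₑ ^ (-(2 * q)) =
      ∫⁻ t in Ioi 0, ENNReal.ofReal (t ^ (q - 1)) * ENNReal.ofReal (rexp (-t * ‖x‖ ^ 2)) := by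
  have hx' : 0 < ‖x‖ := norm_pos_iff.mpr hx
  have hΓ := Real.Gamma_pos_of_pos hq
  rw [← ofReal_norm, ENNReal.ofReal_rpow_of_pos hx', ← mul_neg, rpow_mul hx'.le, rpow_two,
    ← ENNReal.ofReal_mul hΓ.le, ← lintegral_rpow_mul_exp_neg_mul hq (sq_pos_of_pos hx')]
  refine setLIntegral_congr_fun measurableSet_Ioi fun t (ht : 0 < t) ↦ ?_
  rw [← ENNReal.ofReal_mul (rpow_nonneg ht.le _), neg_mul, mul_comm t]

lemma lintegral_rpow_mul_heat_kernel_le {V : Type*} [NormedAddCommGroup V] {d β : ℝ}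
    (hβ : 0 < β) (hβd : β < d) (ξ ζ : V) :
    ∫⁻ t in Ioi 0, ENNReal.ofReal (t ^ ((d - β) / 2 - 1)) *
        ENNReal.ofReal ((π / t) ^ (d / 2) * rexp (-(‖ξ - ζ‖ ^ 2 / (4 * t)))) ≤
      ENNReal.ofReal (Real.Gamma ((d - β) / 2) * rieszConstant d β) * edist ξ ζ ^ (-β) := by
  have hc := rieszConstant_pos hβ hβd
  have hΓ := Real.Gamma_pos_of_pos (half_pos (sub_pos.mpr hβd))
  rcases eq_or_ne ξ ζ with rfl | hne
  · rw [edist_self, ENNReal.zero_rpow_of_neg (neg_neg_of_pos hβ),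
      ENNReal.mul_top (by positivity)]
    exact le_top
  have hr : 0 < ‖ξ - ζ‖ := norm_pos_iff.mpr (sub_ne_zero.mpr hne)
  have hsplit : ∀ t ∈ Ioi (0 : ℝ), ENNReal.ofReal (t ^ ((d - β) / 2 - 1)) *
      ENNReal.ofReal ((π / t) ^ (d / 2) * rexp (-(‖ξ - ζ‖ ^ 2 / (4 * t)))) =
      ENNReal.ofReal (π ^ (d / 2)) *
        ENNReal.ofReal (t ^ (-(β / 2) - 1) * rexp (-(‖ξ - ζ‖ ^ 2 / 4 / t))) :=
    fun t (ht : 0 < t) ↦ by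
      rw [← ENNReal.ofReal_mul (by positivity), ← ENNReal.ofReal_mul (by positivity),
        div_rpow pi_nonneg ht.le, div_div, show -(β / 2) - 1 = (d - β) / 2 - 1 - d / 2 by ring,
        rpow_sub ht _ (d / 2)]
      ring_nf
  have hpow : (‖ξ - ζ‖ ^ 2 / 4) ^ (-(β / 2)) = 2 ^ β * ‖ξ - ζ‖ ^ (-β) := by
    rw [show ‖ξ - ζ‖ ^ 2 / 4 = (‖ξ - ζ‖ / 2) ^ (2 : ℝ) by rw [rpow_two]; ring,
      ← rpow_mul (by positivity), div_rpow hr.le two_pos.le, mul_neg, mul_div_cancel₀ _ two_ne_zero,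
      rpow_neg two_pos.le, div_inv_eq_mul, mul_comm]
  refine le_of_eq ?_
  rw [setLIntegral_congr_fun measurableSet_Ioi hsplit,
    lintegral_const_mul' _ _ ENNReal.ofReal_ne_top,
    lintegral_rpow_mul_exp_neg_div (half_pos hβ) (by positivity), hpow, edist_dist, dist_eq_norm,
    ENNReal.ofReal_rpow_of_pos hr, ← ENNReal.ofReal_mul (by positivity),
    ← ENNReal.ofReal_mul (by positivity), rieszConstant]
  congr 1
  field_simp

/-! ### Duality and the extension operator -/

lemma eLpNorm_two_sq_eq_lintegral {X E : Type*} [MeasurableSpace X] [NormedAddCommGroup E]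
    (μ : Measure X) (f : X → E) : eLpNorm f 2 μ ^ 2 = ∫⁻ x, ‖f x‖ₑ ^ 2 ∂μ := by
  simpa using eLpNorm_nnreal_pow_eq_lintegral (f := f) (μ := μ) (p := 2) two_ne_zero

lemma enorm_integral_eq_lintegral_enorm_of_nonneg {X : Type*} [MeasurableSpace X] {μ : Measure X}
    {u : X → ℝ} (hu : Integrable u μ) (hu₀ : ∀ x, 0 ≤ u x) :
    ‖∫ x, (u x : ℂ) ∂μ‖ₑ = ∫⁻ x, ‖u x‖ₑ ∂μ := by
  rw [integral_complex_ofReal, ← ofReal_norm, norm_real, norm_of_nonneg (integral_nonneg hu₀),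
    ofReal_integral_eq_lintegral_ofReal hu (ae_of_all _ hu₀)]
  exact lintegral_congr fun x ↦ (enorm_of_nonneg (hu₀ x)).symm

lemma eLpNorm_two_sq_eq_enorm_integral_mul_star {X : Type*} [MeasurableSpace X] {μ : Measure X}
    {F : X → ℂ} (hF : MemLp F 2 μ) : eLpNorm F 2 μ ^ 2 = ‖∫ x, F x * star F x ∂μ‖ₑ := by
  have hsq : ∀ x, F x * star F x = (‖F x‖ ^ 2 : ℝ) := fun x ↦ by
    rw [ofReal_pow]
    exact mul_conj' (F x)
  simp only [hsq]
  rw [enorm_integral_eq_lintegral_enorm_of_nonneg hF.norm.integrable_sq fun x ↦ sq_nonneg _,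
    eLpNorm_two_sq_eq_lintegral]
  simp only [enorm_pow, enorm_norm]

lemma enorm_integral_mul_le_eLpNorm_weight_smul {X : Type*} [MeasurableSpace X] {μ : Measure X}
    {w : X → ℝ} (hw : AEMeasurable w μ) (hw₀ : ∀ᵐ x ∂μ, w x ≠ 0) {f g : X → ℂ}
    (hf : AEStronglyMeasurable f μ) (hg : AEStronglyMeasurable g μ) :
    ‖∫ x, f x * g x ∂μ‖ₑ ≤
      eLpNorm (fun x ↦ w x • f x) 2 μ * eLpNorm (fun x ↦ (w x)⁻¹ • g x) 2 μ := by
  have hwf : AEStronglyMeasurable (fun x ↦ w x • f x) μ := hw.aestronglyMeasurable.smul hf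
  have hwg : AEStronglyMeasurable (fun x ↦ (w x)⁻¹ • g x) μ := hw.inv.aestronglyMeasurable.smul hg
  have hcancel : ∀ᵐ x ∂μ, f x * g x = (w x • f x) • (w x)⁻¹ • g x := by
    filter_upwards [hw₀] with x hx
    rw [smul_eq_mul, smul_mul_smul_comm, mul_inv_cancel₀ hx, one_smul]
  rw [integral_congr_ae hcancel]
  refine (enorm_integral_le_lintegral_enorm _).trans ?_
  rw [← eLpNorm_one_eq_lintegral_enorm]
  exact eLpNorm_smul_le_mul_eLpNorm (φ := fun x ↦ w x • f x) (f := fun x ↦ (w x)⁻¹ • g x) hwg hwf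

lemma lintegral_lintegral_kernel_mul_le {X : Type*} [MeasurableSpace X] {σ : Measure X} [SFinite σ]
    {k : X → X → ℝ≥0∞} (hk : Measurable (Function.uncurry k)) {M : ℝ≥0∞}
    (hrow : ∀ x, ∫⁻ y, k x y ∂σ ≤ M) (hcol : ∀ y, ∫⁻ x, k x y ∂σ ≤ M) {u : X → ℝ≥0∞}
    (hu : AEMeasurable u σ) :
    ∫⁻ x, ∫⁻ y, k x y * (u x * u y) ∂σ ∂σ ≤ M * ∫⁻ x, u x ^ 2 ∂σ := by
  have hbound : ∀ {l : X → X → ℝ≥0∞}, Measurable (Function.uncurry l) →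
      (∀ x, ∫⁻ y, l x y ∂σ ≤ M) → ∫⁻ x, ∫⁻ y, l x y * (u x ^ 2 / 2) ∂σ ∂σ ≤
        M * (∫⁻ x, u x ^ 2 ∂σ) / 2 := fun {l} hl hlM ↦ calc
    ∫⁻ x, ∫⁻ y, l x y * (u x ^ 2 / 2) ∂σ ∂σ ≤ ∫⁻ x, M * 2⁻¹ * u x ^ 2 ∂σ := by
        gcongr with x
        rw [lintegral_mul_const _ hl.of_uncurry_left, div_eq_mul_inv, mul_assoc, mul_comm _ 2⁻¹]
        gcongr
        exact hlM x
    _ = M * (∫⁻ x, u x ^ 2 ∂σ) / 2 := by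
        rw [lintegral_const_mul'' _ (hu.pow_const 2), div_eq_mul_inv, mul_right_comm]
  have hamgm : ∀ x y, k x y * (u x * u y) ≤ k x y * (u x ^ 2 / 2) + k x y * (u y ^ 2 / 2) :=
    fun x y ↦ by
      rw [← mul_add]
      gcongr
      simpa using ENNReal.young_inequality (u x) (u y) Real.HolderConjugate.two_two
  have hmeas : AEMeasurable (Function.uncurry fun x y ↦ k x y * (u y ^ 2 / 2)) (σ.prod σ) :=
    hk.aemeasurable.mul ((hu.comp_snd.pow_const 2).div_const 2)
  calc ∫⁻ x, ∫⁻ y, k x y * (u x * u y) ∂σ ∂σ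
      ≤ ∫⁻ x, ∫⁻ y, (k x y * (u x ^ 2 / 2) + k x y * (u y ^ 2 / 2)) ∂σ ∂σ := by
        gcongr with x y
        exact hamgm x y
    _ = (∫⁻ x, ∫⁻ y, k x y * (u x ^ 2 / 2) ∂σ ∂σ) + ∫⁻ x, ∫⁻ y, k y x * (u x ^ 2 / 2) ∂σ ∂σ := by
        rw [← lintegral_lintegral_swap hmeas]
        refine .trans (lintegral_congr fun x ↦ ?_)
          (lintegral_add_right' _ hmeas.lintegral_prod_right')
        exact lintegral_add_left (hk.of_uncurry_left.mul_const _) _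
    _ ≤ M * (∫⁻ x, u x ^ 2 ∂σ) / 2 + M * (∫⁻ x, u x ^ 2 ∂σ) / 2 :=
        add_le_add (hbound hk hrow) (hbound (hk.comp measurable_swap) hcol)
    _ = M * ∫⁻ x, u x ^ 2 ∂σ := ENNReal.add_halves _

/-- The Fourier transform `x ↦ ∫ e^{-i⟨ξ, x⟩} g ξ ∂μ(ξ)` of the density `g` with respect to `μ`, in
the angular frequency convention and without normalizing factor. For a surface measure `μ` this is
the Fourier extension operator. -/
def angularFourier {V : Type*} [NormedAddCommGroup V] [InnerProductSpace ℝ V] [MeasurableSpace V]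
    (μ : Measure V) (g : V → ℂ) : V → ℂ :=
  VectorFourier.fourierIntegral Real.probChar μ (innerₗ V) g

section AngularFourier

variable {V : Type*} [NormedAddCommGroup V] [InnerProductSpace ℝ V] [MeasurableSpace V]

lemma norm_angularFourier_le (μ : Measure V) (g : V → ℂ) (x : V) :
    ‖angularFourier μ g x‖ ≤ ∫ ξ, ‖g ξ‖ ∂μ :=
  VectorFourier.norm_fourierIntegral_le_integral_norm _ _ _ _ _

variable [BorelSpace V]

lemma continuous_angularFourier {μ : Measure V} {g : V → ℂ} (hg : Integrable g μ) :
    Continuous (angularFourier μ g) :=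
  VectorFourier.fourierIntegral_continuous continuous_probChar continuous_inner hg

lemma integral_angularFourier_mul_eq [SecondCountableTopology V] {μ ν : Measure V} [SigmaFinite μ]
    [SigmaFinite ν] {f g : V → ℂ} (hf : Integrable f μ) (hg : Integrable g ν) :
    ∫ ξ, angularFourier μ f ξ * g ξ ∂ν = ∫ x, f x * angularFourier ν g x ∂μ := by
  have h := VectorFourier.integral_fourierIntegral_smul_eq_flip (L := innerₗ V) continuous_probChar
    continuous_inner hf hg
  rwa [flip_innerₗ] at h

lemma eLpNorm_angularFourier_le_of_extension_bound [SecondCountableTopology V] {μ σ : Measure V}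
    [SigmaFinite μ] [IsFiniteMeasure σ] {w : V → ℝ} (hw : AEMeasurable w μ)
    (hw₀ : ∀ᵐ x ∂μ, w x ≠ 0) {M : ℝ≥0∞}
    (hM : ∀ g : V → ℂ, Integrable g σ →
      eLpNorm (fun x ↦ (w x)⁻¹ • angularFourier σ g x) 2 μ ≤ M * eLpNorm g 2 σ)
    {f : V → ℂ} (hf : Integrable f μ) :
    eLpNorm (angularFourier μ f) 2 σ ≤ M * eLpNorm (fun x ↦ w x • f x) 2 μ := by
  set F := angularFourier μ f
  have hF : MemLp F 2 σ := .of_bound (continuous_angularFourier hf).aestronglyMeasurable _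
    (ae_of_all _ (norm_angularFourier_le μ f))
  have hF' : Integrable (star F) σ := hF.star.integrable one_le_two
  have hsq : eLpNorm F 2 σ ^ 2 ≤ M * eLpNorm (fun x ↦ w x • f x) 2 μ * eLpNorm F 2 σ := calc
    eLpNorm F 2 σ ^ 2 = ‖∫ x, f x * angularFourier σ (star F) x ∂μ‖ₑ := by
        rw [eLpNorm_two_sq_eq_enorm_integral_mul_star hF, integral_angularFourier_mul_eq hf hF']
    _ ≤ eLpNorm (fun x ↦ w x • f x) 2 μ *
          eLpNorm (fun x ↦ (w x)⁻¹ • angularFourier σ (star F) x) 2 μ :=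
        enorm_integral_mul_le_eLpNorm_weight_smul hw hw₀ hf.aestronglyMeasurable
          (continuous_angularFourier hF').aestronglyMeasurable
    _ ≤ eLpNorm (fun x ↦ w x • f x) 2 μ * (M * eLpNorm F 2 σ) := by
        rw [← eLpNorm_star (f := F)]
        gcongr
        exact hM (star F) hF'
    _ = M * eLpNorm (fun x ↦ w x • f x) 2 μ * eLpNorm F 2 σ := by ring
  rcases eq_or_ne (eLpNorm F 2 σ) 0 with hzero | hzero
  · exact hzero.trans_le zero_le
  · rwa [sq, ENNReal.mul_le_mul_iff_left hzero hF.eLpNorm_ne_top] at hsq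

lemma integral_mul_angularFourier_mul_star [SecondCountableTopology V] {μ σ : Measure V}
    [SigmaFinite μ] [SigmaFinite σ] {g h : V → ℂ} (hg : Integrable g σ) (hh : Integrable h μ) :
    ∫ x, h x * (angularFourier σ g x * star (angularFourier σ g x)) ∂μ =
      ∫ p, g p.1 * star (g p.2) * angularFourier μ h (p.1 - p.2) ∂σ.prod σ := by
  let L : V × V →ₗ[ℝ] V →ₗ[ℝ] ℝ := innerₗ V ∘ₗ (LinearMap.fst ℝ V V - LinearMap.snd ℝ V V)
  have hL : Continuous fun p : (V × V) × V ↦ L p.1 p.2 :=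
    (continuous_fst.fst.sub continuous_fst.snd).inner continuous_snd
  have hgg : Integrable (fun p : V × V ↦ g p.1 * star (g p.2)) (σ.prod σ) :=
    hg.mul_prod (Complex.conjLIE.integrable_comp_iff.mpr hg)
  have hsq : ∀ x, VectorFourier.fourierIntegral Real.probChar (σ.prod σ) L
      (fun p ↦ g p.1 * star (g p.2)) x = angularFourier σ g x * star (angularFourier σ g x) :=
    fun x ↦ by
      simp only [angularFourier, VectorFourier.fourierIntegral_probChar, RCLike.star_def,
        smul_eq_mul]
      rw [← integral_conj, ← integral_prod_mul]
      congr 1 with p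
      simp only [map_mul, ← Complex.exp_conj, map_neg, Complex.conj_ofReal, Complex.conj_I]
      rw [mul_mul_mul_comm, ← Complex.exp_add]
      congr 2
      simp only [L, LinearMap.comp_apply, LinearMap.sub_apply, LinearMap.fst_apply,
        LinearMap.snd_apply, map_sub, ofReal_sub]
      ring
  have hflip : ∀ p : V × V, VectorFourier.fourierIntegral Real.probChar μ L.flip h p =
      angularFourier μ h (p.1 - p.2) := fun p ↦ by
    simp only [angularFourier, VectorFourier.fourierIntegral, L, LinearMap.flip_apply,
      LinearMap.comp_apply, LinearMap.sub_apply, LinearMap.fst_apply, LinearMap.snd_apply,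
      innerₗ_apply_apply, real_inner_comm]
  have hswap := VectorFourier.integral_fourierIntegral_smul_eq_flip (L := L) continuous_probChar hL
    hgg hh
  simp only [hsq, hflip, smul_eq_mul] at hswap
  simpa only [mul_comm (h _)] using hswap

section Gaussian

variable [FiniteDimensional ℝ V]

lemma integrable_exp_neg_mul_sq_norm {t : ℝ} (ht : 0 < t) :
    Integrable (fun x : V ↦ rexp (-t * ‖x‖ ^ 2)) := by
  refine .of_integral_ne_zero ?_
  rw [GaussianFourier.integral_rexp_neg_mul_sq_norm ht]
  positivity

lemma angularFourier_gaussian {t : ℝ} (ht : 0 < t) (ξ : V) :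
    angularFourier volume (fun x : V ↦ (rexp (-t * ‖x‖ ^ 2) : ℂ)) ξ =
      ((π / t) ^ (finrank ℝ V / 2 : ℝ) * rexp (-(‖ξ‖ ^ 2 / (4 * t))) : ℝ) := by
  have hexp : ∀ x : V, cexp (-innerₗ V x ξ * I) • (rexp (-t * ‖x‖ ^ 2) : ℂ) =
      cexp (-t * ‖x‖ ^ 2 + -I * ⟪ξ, x⟫) := fun x ↦ by
    rw [smul_eq_mul, ofReal_exp, ← Complex.exp_add, innerₗ_apply_apply, real_inner_comm]
    push_cast
    ring_nf
  rw [angularFourier, VectorFourier.fourierIntegral_probChar, integral_congr_ae (ae_of_all _ hexp),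
    GaussianFourier.integral_cexp_neg_mul_sq_norm_add (by simpa using ht), ofReal_mul,
    ofReal_cpow (by positivity), neg_sq, I_sq]
  push_cast
  ring_nf

lemma lintegral_gaussian_mul_angularFourier_le {σ : Measure V} [IsFiniteMeasure σ] {g : V → ℂ}
    (hg : Integrable g σ) {t : ℝ} (ht : 0 < t) :
    ∫⁻ x, ENNReal.ofReal (rexp (-t * ‖x‖ ^ 2)) * ‖angularFourier σ g x‖ₑ ^ 2 ≤
      ∫⁻ p : V × V, ENNReal.ofReal ((π / t) ^ (finrank ℝ V / 2 : ℝ) *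
        rexp (-(‖p.1 - p.2‖ ^ 2 / (4 * t)))) * (‖g p.1‖ₑ * ‖g p.2‖ₑ) ∂σ.prod σ := by
  let F := angularFourier σ g
  have hint : Integrable fun x ↦ rexp (-t * ‖x‖ ^ 2) * ‖F x‖ ^ 2 :=
    (integrable_exp_neg_mul_sq_norm ht).mul_bdd
      (((continuous_angularFourier hg).norm.pow 2).aestronglyMeasurable)
      (ae_of_all _ fun x ↦ by
        rw [norm_of_nonneg (by positivity)]
        exact pow_le_pow_left₀ (norm_nonneg _) (norm_angularFourier_le σ g x) 2)
  calc ∫⁻ x, ENNReal.ofReal (rexp (-t * ‖x‖ ^ 2)) * ‖F x‖ₑ ^ 2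
      = ‖∫ x, ((rexp (-t * ‖x‖ ^ 2) * ‖F x‖ ^ 2 : ℝ) : ℂ)‖ₑ := by
        rw [enorm_integral_eq_lintegral_enorm_of_nonneg hint fun x ↦ by positivity]
        simp only [enorm_mul, enorm_pow, enorm_norm, enorm_of_nonneg (exp_nonneg _)]
    _ = ‖∫ x, (rexp (-t * ‖x‖ ^ 2) : ℂ) * (F x * star (F x))‖ₑ := by
        simp only [RCLike.star_def, mul_conj', ofReal_mul, ofReal_pow]
    _ = ‖∫ p, g p.1 * star (g p.2) * angularFourier volume
          (fun x ↦ (rexp (-t * ‖x‖ ^ 2) : ℂ)) (p.1 - p.2) ∂σ.prod σ‖ₑ := by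
        exact congrArg _ (integral_mul_angularFourier_mul_star hg
          (integrable_exp_neg_mul_sq_norm ht).ofReal)
    _ ≤ ∫⁻ p, ‖g p.1 * star (g p.2) * angularFourier volume
          (fun x ↦ (rexp (-t * ‖x‖ ^ 2) : ℂ)) (p.1 - p.2)‖ₑ ∂σ.prod σ :=
        enorm_integral_le_lintegral_enorm _
    _ = ∫⁻ p : V × V, ENNReal.ofReal ((π / t) ^ (finrank ℝ V / 2 : ℝ) *
          rexp (-(‖p.1 - p.2‖ ^ 2 / (4 * t)))) * (‖g p.1‖ₑ * ‖g p.2‖ₑ) ∂σ.prod σ := by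
        refine lintegral_congr fun p ↦ ?_
        rw [angularFourier_gaussian ht, enorm_mul, enorm_mul, RCLike.star_def, RCLike.enorm_conj,
          mul_comm, ← ofReal_norm (ofReal _), norm_real, norm_of_nonneg (by positivity)]

lemma gamma_mul_lintegral_enorm_rpow_neg_mul [Nontrivial V] {q : ℝ} (hq : 0 < q) {u : V → ℝ≥0∞}
    (hu : Measurable u) :
    ENNReal.ofReal (Real.Gamma q) * ∫⁻ x, ‖x‖ₑ ^ (-(2 * q)) * u x =
      ∫⁻ t in Ioi 0, ENNReal.ofReal (t ^ (q - 1)) *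
        ∫⁻ x, ENNReal.ofReal (rexp (-t * ‖x‖ ^ 2)) * u x := by
  calc ENNReal.ofReal (Real.Gamma q) * ∫⁻ x, ‖x‖ₑ ^ (-(2 * q)) * u x
      = ∫⁻ x, ∫⁻ t in Ioi 0, ENNReal.ofReal (t ^ (q - 1)) *
          (ENNReal.ofReal (rexp (-t * ‖x‖ ^ 2)) * u x) := by
        rw [← lintegral_const_mul' _ _ ENNReal.ofReal_ne_top]
        refine lintegral_congr_ae ((measure_eq_zero_iff_ae_notMem.mp
          (measure_singleton 0)).mono fun x (hx : x ≠ 0) ↦ ?_)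
        simp only [← mul_assoc]
        rw [gamma_mul_enorm_rpow_neg_eq_lintegral hq hx, lintegral_mul_const _ (by fun_prop)]
    _ = ∫⁻ t in Ioi 0, ENNReal.ofReal (t ^ (q - 1)) *
          ∫⁻ x, ENNReal.ofReal (rexp (-t * ‖x‖ ^ 2)) * u x := by
        rw [lintegral_lintegral_swap (by fun_prop)]
        simp only [lintegral_const_mul' _ _ ENNReal.ofReal_ne_top]

lemma lintegral_rpow_mul_lintegral_heat_kernel_mul_le {d β : ℝ} (hβ : 0 < β) (hβd : β < d)
    {ρ : Measure (V × V)} [SFinite ρ] {h : V × V → ℝ≥0∞} (hh : AEMeasurable h ρ) :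
    ∫⁻ t in Ioi 0, ENNReal.ofReal (t ^ ((d - β) / 2 - 1)) *
        ∫⁻ p, ENNReal.ofReal ((π / t) ^ (d / 2) * rexp (-(‖p.1 - p.2‖ ^ 2 / (4 * t)))) * h p ∂ρ ≤
      ENNReal.ofReal (Real.Gamma ((d - β) / 2) * rieszConstant d β) *
        ∫⁻ p, edist p.1 p.2 ^ (-β) * h p ∂ρ := by
  simp only [← lintegral_const_mul' _ _ ENNReal.ofReal_ne_top, ← mul_assoc]
  rw [lintegral_lintegral_swap (by fun_prop)]
  gcongr with p
  rw [lintegral_mul_const _ (by fun_prop)]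
  gcongr
  exact lintegral_rpow_mul_heat_kernel_le hβ hβd p.1 p.2

lemma lintegral_enorm_rpow_neg_mul_angularFourier_le {σ : Measure V} [IsFiniteMeasure σ] {g : V → ℂ}
    (hg : Integrable g σ) {β : ℝ} (hβ : 0 < β) (hβd : β < finrank ℝ V) :
    ∫⁻ x, ‖x‖ₑ ^ (-((finrank ℝ V : ℝ) - β)) * ‖angularFourier σ g x‖ₑ ^ 2 ≤
      ENNReal.ofReal (rieszConstant (finrank ℝ V) β) *
        ∫⁻ ξ, ∫⁻ ζ, edist ξ ζ ^ (-β) * (‖g ξ‖ₑ * ‖g ζ‖ₑ) ∂σ ∂σ := by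
  have hV : Nontrivial V := nontrivial_of_finrank_pos (R := ℝ) (mod_cast hβ.trans hβd)
  generalize hd : (finrank ℝ V : ℝ) = d at hβd ⊢
  have hΓ := Real.Gamma_pos_of_pos (half_pos (sub_pos.mpr hβd))
  have hgg : AEMeasurable (fun p : V × V ↦ ‖g p.1‖ₑ * ‖g p.2‖ₑ) (σ.prod σ) :=
    hg.1.enorm.comp_fst.mul hg.1.enorm.comp_snd
  rw [← ENNReal.mul_le_mul_iff_right (ENNReal.ofReal_pos.mpr hΓ).ne' ENNReal.ofReal_ne_top]
  calc ENNReal.ofReal (Real.Gamma ((d - β) / 2)) *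
        ∫⁻ x, ‖x‖ₑ ^ (-(d - β)) * ‖angularFourier σ g x‖ₑ ^ 2
      = ∫⁻ t in Ioi 0, ENNReal.ofReal (t ^ ((d - β) / 2 - 1)) *
          ∫⁻ x, ENNReal.ofReal (rexp (-t * ‖x‖ ^ 2)) * ‖angularFourier σ g x‖ₑ ^ 2 := by
        rw [← gamma_mul_lintegral_enorm_rpow_neg_mul (half_pos (sub_pos.mpr hβd))
          ((continuous_angularFourier hg).enorm.measurable.pow_const 2),
          mul_div_cancel₀ _ two_ne_zero]
    _ ≤ ∫⁻ t in Ioi 0, ENNReal.ofReal (t ^ ((d - β) / 2 - 1)) *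
          ∫⁻ p : V × V, ENNReal.ofReal ((π / t) ^ (d / 2) *
            rexp (-(‖p.1 - p.2‖ ^ 2 / (4 * t)))) * (‖g p.1‖ₑ * ‖g p.2‖ₑ) ∂σ.prod σ :=
        setLIntegral_mono' measurableSet_Ioi fun t ht ↦ by
          gcongr
          exact hd ▸ lintegral_gaussian_mul_angularFourier_le hg ht
    _ ≤ ENNReal.ofReal (Real.Gamma ((d - β) / 2) * rieszConstant d β) *
          ∫⁻ p : V × V, edist p.1 p.2 ^ (-β) * (‖g p.1‖ₑ * ‖g p.2‖ₑ) ∂σ.prod σ :=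
        lintegral_rpow_mul_lintegral_heat_kernel_mul_le hβ hβd hgg
    _ = ENNReal.ofReal (Real.Gamma ((d - β) / 2)) * (ENNReal.ofReal (rieszConstant d β) *
          ∫⁻ ξ, ∫⁻ ζ, edist ξ ζ ^ (-β) * (‖g ξ‖ₑ * ‖g ζ‖ₑ) ∂σ ∂σ) := by
        rw [lintegral_prod _ (by fun_prop), ENNReal.ofReal_mul hΓ.le, mul_assoc]

end Gaussian

end AngularFourier

/-! ### Trace estimates for Frostman measures -/

lemma enorm_inv_norm_rpow_smul_sq_le {V : Type*} [NormedAddCommGroup V] {p : ℝ} (hp : 0 < p)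
    (x : V) (z : ℂ) : ‖(‖x‖ ^ p)⁻¹ • z‖ₑ ^ 2 ≤ ‖x‖ₑ ^ (-(2 * p)) * ‖z‖ₑ ^ 2 := by
  rcases eq_or_ne x 0 with rfl | hx
  · simp [zero_rpow hp.ne']
  · have hx' : 0 < ‖x‖ := norm_pos_iff.mpr hx
    rw [enorm_smul, mul_pow, enorm_of_nonneg (by positivity), ← rpow_neg hx'.le,
      ← ENNReal.ofReal_rpow_of_pos hx', ofReal_norm, ← ENNReal.rpow_natCast, ← ENNReal.rpow_mul]
    exact le_of_eq (by push_cast; ring_nf)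

namespace IsFrostman

lemma lintegral_edist_rpow_neg_mul_le {X : Type*} [MetricSpace X] [SecondCountableTopology X]
    [MeasurableSpace X] [OpensMeasurableSpace X] {σ : Measure X} {K : ℝ≥0} {s τ β : ℝ}
    (hσ : IsFrostman σ K s τ) (hτ : 0 < τ) (hβ : 0 < β) (hβs : β < s) {u : X → ℝ≥0∞}
    (hu : AEMeasurable u σ) :
    ∫⁻ ξ, ∫⁻ ζ, edist ξ ζ ^ (-β) * (u ξ * u ζ) ∂σ ∂σ ≤
      ENNReal.ofReal (K * (s / (s - β) * τ ^ (s - β))) * ∫⁻ ξ, u ξ ^ 2 ∂σ := by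
  have := hσ.isFiniteMeasure hτ
  have hrow : ∀ ξ, ∫⁻ ζ, edist ξ ζ ^ (-β) ∂σ ≤ ENNReal.ofReal (K * (s / (s - β) * τ ^ (s - β))) :=
    fun ξ ↦ (hσ.lintegral_edist_rpow_neg_le hτ hβ hβs ξ).trans_eq <| by
      rw [ENNReal.ofReal_mul K.coe_nonneg, ENNReal.ofReal_coe_nnreal]
  exact lintegral_lintegral_kernel_mul_le (k := fun ξ ζ ↦ edist ξ ζ ^ (-β)) (by fun_prop) hrow
    (fun ζ ↦ by simpa only [edist_comm] using hrow ζ) hu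

variable {V : Type*} [NormedAddCommGroup V] [InnerProductSpace ℝ V] [FiniteDimensional ℝ V]
  [MeasurableSpace V] [BorelSpace V] {σ : Measure V} {K : ℝ≥0} {s τ β : ℝ}

lemma eLpNorm_inv_norm_rpow_smul_angularFourier_le (hσ : IsFrostman σ K s τ) (hτ : 0 < τ)
    (hβ : 0 < β) (hβs : β < s) (hβd : β < finrank ℝ V) {g : V → ℂ} (hg : Integrable g σ) :
    eLpNorm (fun x ↦ (‖x‖ ^ ((finrank ℝ V - β) / 2))⁻¹ • angularFourier σ g x) 2 volume ≤
      ENNReal.ofReal √(rieszConstant (finrank ℝ V) β * (K * (s / (s - β) * τ ^ (s - β)))) *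
        eLpNorm g 2 σ := by
  have := hσ.isFiniteMeasure hτ
  have hc := rieszConstant_pos hβ hβd
  have hratio : 0 < s / (s - β) := div_pos (hβ.trans hβs) (sub_pos.mpr hβs)
  rw [← ENNReal.pow_le_pow_left_iff two_ne_zero, mul_pow, ← ENNReal.ofReal_pow (sqrt_nonneg _),
    sq_sqrt (by positivity), eLpNorm_two_sq_eq_lintegral, eLpNorm_two_sq_eq_lintegral]
  calc ∫⁻ x, ‖(‖x‖ ^ ((finrank ℝ V - β) / 2))⁻¹ • angularFourier σ g x‖ₑ ^ 2
      ≤ ∫⁻ x, ‖x‖ₑ ^ (-((finrank ℝ V : ℝ) - β)) * ‖angularFourier σ g x‖ₑ ^ 2 := by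
        gcongr with x
        simpa only [mul_div_cancel₀ _ (two_ne_zero' ℝ)] using
          enorm_inv_norm_rpow_smul_sq_le (half_pos (sub_pos.mpr hβd)) x (angularFourier σ g x)
    _ ≤ ENNReal.ofReal (rieszConstant (finrank ℝ V) β) *
          ∫⁻ ξ, ∫⁻ ζ, edist ξ ζ ^ (-β) * (‖g ξ‖ₑ * ‖g ζ‖ₑ) ∂σ ∂σ :=
        lintegral_enorm_rpow_neg_mul_angularFourier_le hg hβ hβd
    _ ≤ ENNReal.ofReal (rieszConstant (finrank ℝ V) β) *
          (ENNReal.ofReal (K * (s / (s - β) * τ ^ (s - β))) * ∫⁻ ξ, ‖g ξ‖ₑ ^ 2 ∂σ) := by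
        gcongr
        exact hσ.lintegral_edist_rpow_neg_mul_le hτ hβ hβs hg.1.enorm
    _ = ENNReal.ofReal (rieszConstant (finrank ℝ V) β * (K * (s / (s - β) * τ ^ (s - β)))) *
          ∫⁻ ξ, ‖g ξ‖ₑ ^ 2 ∂σ := by
        rw [ENNReal.ofReal_mul hc.le, mul_assoc]

lemma eLpNorm_angularFourier_le (hσ : IsFrostman σ K s τ) (hτ : 0 < τ) (hβ : 0 < β)
    (hβs : β < s) (hβd : β < finrank ℝ V) {f : V → ℂ} (hf : Integrable f) :
    eLpNorm (angularFourier volume f) 2 σ ≤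
      ENNReal.ofReal √(rieszConstant (finrank ℝ V) β * (K * (s / (s - β) * τ ^ (s - β)))) *
        eLpNorm (fun x ↦ ‖x‖ ^ ((finrank ℝ V - β) / 2) • f x) 2 volume := by
  have := hσ.isFiniteMeasure hτ
  have : Nontrivial V := nontrivial_of_finrank_pos (R := ℝ) (mod_cast hβ.trans hβd)
  have hne : ∀ᵐ x : V, x ≠ 0 := measure_eq_zero_iff_ae_notMem.mp (measure_singleton 0)
  exact eLpNorm_angularFourier_le_of_extension_bound (by fun_prop)
    (hne.mono fun x hx ↦ (rpow_pos_of_pos (norm_pos_iff.mpr hx) _).ne')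
    (fun g hg ↦ hσ.eLpNorm_inv_norm_rpow_smul_angularFourier_le hτ hβ hβs hβd hg) hf

end IsFrostman

lemma IsLipschitzGauge.exists_isFrostman {V : Type*} [NormedAddCommGroup V] [NormedSpace ℝ V]
    [FiniteDimensional ℝ V] [MeasurableSpace V] [BorelSpace V] {a : V → ℝ}
    (ha : IsLipschitzGauge a) {m : ℕ} (hm : finrank ℝ V = m + 1) :
    ∃ K, ∀ τ : ℝ, 0 < τ → IsFrostman (μH[(m : ℝ)].restrict {ξ | a ξ = τ}) K m τ := by
  obtain ⟨_, hreg⟩ := ha.exists_isUpperAhlforsRegular_setOf_eq_one hm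
  obtain ⟨K, hK⟩ := hreg.exists_isFrostman_smul m.cast_nonneg ha.isBounded_setOf_eq_one
  exact ⟨K, fun τ hτ ↦ ha.setOf_eq_smul hτ ▸ hK τ hτ⟩

lemma IsLipschitzGauge.exists_eLpNorm_angularFourier_le {V : Type*} [NormedAddCommGroup V]
    [InnerProductSpace ℝ V] [FiniteDimensional ℝ V] [MeasurableSpace V] [BorelSpace V] {a : V → ℝ}
    (ha : IsLipschitzGauge a) {m : ℕ} (hm : finrank ℝ V = m + 1) {θ : ℝ} (hθ : 0 < θ)
    (hθ' : θ < m / 2) :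
    ∃ C > 0, ∀ τ : ℝ, 0 < τ → ∀ f : V → ℂ, Integrable f →
      eLpNorm (angularFourier volume f) 2 (μH[(m : ℝ)].restrict {ξ | a ξ = τ}) ≤
        ENNReal.ofReal (C * τ ^ θ) * eLpNorm (fun x ↦ ‖x‖ ^ (1 / 2 + θ) • f x) 2 volume := by
  obtain ⟨K, hK⟩ := ha.exists_isFrostman hm
  have hd : (finrank ℝ V : ℝ) = m + 1 := by rw [hm, Nat.cast_add_one]
  set β : ℝ := m - 2 * θ with hβdef
  have hsβ : (m - β : ℝ) = 2 * θ := by rw [hβdef]; ring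
  have hp : (finrank ℝ V - β) / 2 = 1 / 2 + θ := by rw [hd, hβdef]; ring
  set A : ℝ := rieszConstant (finrank ℝ V) β * (K * (m / (m - β))) with hA
  refine ⟨√A + 1, by positivity, fun τ hτ f hf ↦ ?_⟩
  have hconst : √(rieszConstant (finrank ℝ V) β * (K * (m / (m - β) * τ ^ (m - β)))) =
      √A * τ ^ θ := by
    rw [← mul_assoc (K : ℝ), ← mul_assoc, ← hA, sqrt_mul' _ (by positivity), hsβ, mul_comm 2 θ,
      rpow_mul hτ.le, rpow_two, sqrt_sq (by positivity)]
  have hbound := (hK τ hτ).eLpNorm_angularFourier_le hτ (β := β) (by linarith) (by linarith)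
    (by linarith) hf
  rw [hconst, hp] at hbound
  refine hbound.trans ?_
  gcongr
  exact le_add_of_nonneg_right zero_le_one

lemma isLipschitzGauge_of_contDiffOn {V : Type*} [NormedAddCommGroup V] [NormedSpace ℝ V]
    {a : V → ℝ} (hsmooth : ContDiffOn ℝ 1 a {0}ᶜ)
    (hhom : ∀ t : ℝ, 0 < t → ∀ ξ, a (t • ξ) = t * a ξ) (hpos : ∀ ξ ≠ 0, 0 < a ξ) :
    IsLipschitzGauge a where
  locallyLipschitzOn ξ hξ := by
    obtain ⟨L, U, hU, hL⟩ :=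
      (hsmooth.contDiffAt (isOpen_compl_singleton.mem_nhds hξ)).exists_lipschitzOnWith
    exact ⟨L, U, mem_nhdsWithin_of_mem_nhds hU, hL⟩
  map_smul := hhom
  pos := hpos

lemma FT_eq_smul_angularFourier (n : ℕ) (f : EuclideanSpace ℝ (Fin n) → ℂ) :
    FT n f = ((2 * π) ^ (-(n : ℝ) / 2) : ℝ) • angularFourier volume f := by
  funext ξ
  simp only [FT, angularFourier, VectorFourier.fourierIntegral_probChar, Pi.smul_apply,
    smul_eq_mul, innerₗ_apply_apply, neg_mul, mul_comm I]

lemma eLpNorm_norm_rpow_smul_le {V : Type*} [NormedAddCommGroup V] [MeasurableSpace V]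
    (μ : Measure V) {p : ℝ} (hp : 0 ≤ p) (f : V → ℂ) :
    eLpNorm (fun x ↦ ‖x‖ ^ p • f x) 2 μ ≤
      eLpNorm (fun x ↦ ((√(1 + ‖x‖ ^ 2) ^ p : ℝ) : ℂ) * f x) 2 μ := by
  refine eLpNorm_mono fun x ↦ ?_
  rw [norm_smul, norm_mul, norm_real, norm_of_nonneg (by positivity),
    norm_of_nonneg (by positivity)]
  gcongr
  exact le_sqrt_of_sq_le (by linarith)

theorem low_frequency_trace_estimate_general {n : ℕ} {θ : ℝ} (hθ : 0 < θ)
    (hθ' : θ < ((n : ℝ) - 1) / 2) {a : EuclideanSpace ℝ (Fin n) → ℝ} (ha : IsLipschitzGauge a) :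
    ∃ C > 0, ∀ τ : ℝ, 0 < τ → ∀ f : EuclideanSpace ℝ (Fin n) → ℂ, Integrable f →
      eLpNorm (FT n f) 2 (μH[(n : ℝ) - 1].restrict {ξ | a ξ = τ}) ≤
        ENNReal.ofReal (C * τ ^ θ) * eLpNorm (fun x ↦ ‖x‖ ^ (1 / 2 + θ) • f x) 2 volume := by
  obtain ⟨m, rfl⟩ : ∃ m, n = m + 1 := Nat.exists_eq_succ_of_ne_zero <| by
    rintro rfl
    rw [Nat.cast_zero] at hθ'
    linarith
  rw [Nat.cast_add_one, add_sub_cancel_right] at hθ' ⊢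
  obtain ⟨C, hC, hbound⟩ :=
    ha.exists_eLpNorm_angularFourier_le finrank_euclideanSpace_fin hθ hθ'
  refine ⟨(2 * π) ^ (-((m + 1 : ℕ) : ℝ) / 2) * C, by positivity, fun τ hτ f hf ↦ ?_⟩
  rw [FT_eq_smul_angularFourier, eLpNorm_const_smul, enorm_of_nonneg (by positivity), mul_assoc,
    ENNReal.ofReal_mul (by positivity), mul_assoc]
  gcongr
  exact hbound τ hτ f hf

theorem low_frequency_trace_estimate (n : ℕ) (hn : 2 ≤ n) (θ : ℝ) (hθ : 0 < θ)
    (hθ' : θ < ((n : ℝ) - 1) / 2)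
    (a : EuclideanSpace ℝ (Fin n) → ℝ)
    (ha_cont : Continuous a)
    (ha_smooth : ContDiffOn ℝ (⊤ : ℕ∞) a {(0 : EuclideanSpace ℝ (Fin n))}ᶜ)
    (ha_hom : ∀ t : ℝ, 0 < t → ∀ ξ, a (t • ξ) = t * a ξ)
    (ha_pos : ∀ ξ : EuclideanSpace ℝ (Fin n), ξ ≠ 0 → 0 < a ξ) :
    ∃ C > 0, ∀ τ : ℝ, 0 < τ → ∀ f : SchwartzMap (EuclideanSpace ℝ (Fin n)) ℂ,
      eLpNorm (FT n (fun x => f x)) 2 (μH[(n : ℝ) - 1].restrict {ξ | a ξ = τ})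
        ≤ ENNReal.ofReal (C * τ ^ θ) *
            eLpNorm (fun x => ((Real.sqrt (1 + ‖x‖ ^ 2) ^ (1 / 2 + θ) : ℝ) : ℂ) * f x) 2 volume := by
  obtain ⟨C, hC, hbound⟩ := low_frequency_trace_estimate_general hθ hθ' <|
    isLipschitzGauge_of_contDiffOn (ha_smooth.of_le (by norm_num)) ha_hom ha_pos
  exact ⟨C, hC, fun τ hτ f ↦ (hbound τ hτ f f.integrable).trans <|
    mul_le_mul_right (eLpNorm_norm_rpow_smul_le volume (by linarith) f) _⟩
end
end

section
/- Let n ≥ 2 and let δ satisfy 0 < δ ≤ 1 if n ≥ 3 and 0 < δ < 1 if n = 2. Let q ∈ C^∞(ℝⁿ∖{0}) be homogeneous of degree zero. There exists a constant C > 0 such that for every Schwartz function f on ℝⁿ, ‖ ( |x|^{δ} q(D_x) − q(D_x) |x|^{δ} ) f ‖_{L²(ℝⁿ)} ≤ C ‖ |x|^{δ} f ‖_{L²(ℝⁿ)}. -/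
open MeasureTheory Real Complex RealInnerProductSpace

noncomputable section

/-!
Both terms of the commutator are bounded separately. For the second one this is Plancherel's
theorem. For the first one, write `u = q(D)f` and compare `|x|^{2δ}` with an average of
`|e^{-2πi⟨x, s⟩} - 1|²` over translations `s`; by Plancherel the weighted norm of `u` becomes an
average of `‖τ_s (q f̂) - q f̂‖²`. In the discrete Leibniz rule
`τ_s (q f̂) - q f̂ = (τ_s q) (τ_s f̂ - f̂) + (τ_s q - q) f̂` the first term reproduces the weighted
norm of `f`, and the Mikhlin bound `|ξ| |τ_s q - q| ≤ B |s|` turns the second into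
`∫ |ξ|^{-2δ} |f̂|²`, which Pitt's inequality controls by the weighted norm of `f` when `2δ < n`.
-/

open scoped FourierTransform NNReal ENNReal

section Plancherel

variable {E : Type*} [NormedAddCommGroup E] [InnerProductSpace ℝ E] [FiniteDimensional ℝ E]
  [MeasurableSpace E] [BorelSpace E] {f : E → ℂ}

theorem eLpNorm_two_sq {α F : Type*} [MeasurableSpace α] [NormedAddCommGroup F] (μ : Measure α)
    (f : α → F) : eLpNorm f 2 μ ^ 2 = ∫⁻ x, ‖f x‖ₑ ^ 2 ∂μ := by
  simpa using eLpNorm_nnreal_pow_eq_lintegral (f := f) (μ := μ) (p := 2) two_ne_zero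

theorem continuous_fourier_of_integrable (hf : Integrable f) : Continuous (𝓕 f) :=
  VectorFourier.fourierIntegral_continuous Real.continuous_fourierChar
    (by exact continuous_inner) hf

theorem fourier_eq_zero_of_not_integrable (hf : ¬ Integrable f) : 𝓕 f = 0 := by
  ext ξ
  rw [Real.fourier_eq, integral_undef (by rwa [Real.fourierIntegral_convergent_iff]),
    Pi.zero_apply]

theorem fourierInv_eq_zero_of_not_integrable (hf : ¬ Integrable f) : 𝓕⁻ f = 0 := by
  ext x
  rw [Real.fourierInv_eq_fourier_neg, fourier_eq_zero_of_not_integrable hf, Pi.zero_apply,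
    Pi.zero_apply]

theorem continuous_fourierInv (f : E → ℂ) : Continuous (𝓕⁻ f) := by
  by_cases hf : Integrable f
  · rw [funext (Real.fourierInv_eq_fourier_neg f)]
    exact (continuous_fourier_of_integrable hf).comp continuous_neg
  · rw [fourierInv_eq_zero_of_not_integrable hf]
    exact continuous_zero

theorem fourier_toLp_ae_eq (hf : Integrable f) (hf2 : MemLp f 2) :
    (𝓕 (hf2.toLp f) : Lp ℂ 2 (volume : Measure E)) =ᵐ[volume] 𝓕 f := by
  refine ae_eq_of_integral_contDiff_smul_eq ((Lp.memLp _).locallyIntegrable (by norm_num))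
    (continuous_fourier_of_integrable hf).locallyIntegrable fun g hg hgs => ?_
  have hgs' : HasCompactSupport (fun x => (g x : ℂ)) := hgs.comp_left Complex.ofReal_zero
  let φ : SchwartzMap E ℂ := hgs'.toSchwartzMap (Complex.ofRealCLM.contDiff.comp hg)
  have hφ : ∀ x, φ x = g x := fun x => rfl
  have hdist : ∫ x, (𝓕 φ) x • (hf2.toLp f) x =
      ∫ x, φ x • (𝓕 (hf2.toLp f) : Lp ℂ 2 (volume : Measure E)) x := by
    simpa only [TemperedDistribution.fourier_apply, Lp.toTemperedDistribution_apply] using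
      (DFunLike.congr_fun (Lp.fourier_toTemperedDistribution_eq (hf2.toLp f)) φ)
  have hswap : ∫ x, (𝓕 φ) x • f x = ∫ x, φ x • (𝓕 f) x :=
    VectorFourier.integral_fourierIntegral_smul_eq_flip Real.continuous_fourierChar
      (by exact continuous_inner) φ.integrable hf |>.trans (by
        simp [Real.fourier_eq, VectorFourier.fourierIntegral, real_inner_comm])
  have hae : ∫ x, (𝓕 φ) x • (hf2.toLp f) x = ∫ x, (𝓕 φ) x • f x :=
    integral_congr_ae (by filter_upwards [hf2.coeFn_toLp] with x hx; rw [hx])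
  simpa [hφ] using (hae.symm.trans hdist).symm.trans hswap

theorem lintegral_enorm_fourier_sq (hf : Integrable f) (hf2 : MemLp f 2) :
    ∫⁻ ξ, ‖𝓕 f ξ‖ₑ ^ 2 = ∫⁻ x, ‖f x‖ₑ ^ 2 := by
  have h : eLpNorm (𝓕 f) 2 volume = eLpNorm f 2 volume := by
    rw [← eLpNorm_congr_ae (fourier_toLp_ae_eq hf hf2), ← Lp.enorm_def, ← ofReal_norm,
      Lp.norm_fourier_eq, ofReal_norm, Lp.enorm_def, eLpNorm_congr_ae hf2.coeFn_toLp]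
  rw [← eLpNorm_two_sq, h, eLpNorm_two_sq]

theorem lintegral_enorm_fourier_sq_le (f : E → ℂ) :
    ∫⁻ ξ, ‖𝓕 f ξ‖ₑ ^ 2 ≤ ∫⁻ x, ‖f x‖ₑ ^ 2 := by
  by_cases hf : Integrable f
  · rcases eq_or_ne (eLpNorm f 2 volume) ⊤ with htop | htop
    · simp [← eLpNorm_two_sq _ f, htop]
    · exact (lintegral_enorm_fourier_sq hf ⟨hf.aestronglyMeasurable, htop.lt_top⟩).le
  · simp [fourier_eq_zero_of_not_integrable hf]

theorem lintegral_enorm_fourierInv_sq_le (f : E → ℂ) :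
    ∫⁻ x, ‖𝓕⁻ f x‖ₑ ^ 2 ≤ ∫⁻ ξ, ‖f ξ‖ₑ ^ 2 := by
  simp_rw [Real.fourierInv_eq_fourier_neg]
  rw [lintegral_neg_eq_self (fun x => ‖𝓕 f x‖ₑ ^ 2)]
  exact lintegral_enorm_fourier_sq_le f

end Plancherel

section PowerIntegrals

variable {κ a : ℝ}

theorem lintegral_Ioo_rpow (hκ : 0 < κ) (ha : 0 ≤ a) :
    ∫⁻ r in Set.Ioo 0 a, ENNReal.ofReal r ^ (κ - 1) =
      ENNReal.ofReal κ⁻¹ * ENNReal.ofReal a ^ κ := by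
  have hint : IntegrableOn (fun r : ℝ => r ^ (κ - 1)) (Set.Ioo 0 a) := by
    rw [← integrableOn_Ioc_iff_integrableOn_Ioo, ← intervalIntegrable_iff_integrableOn_Ioc_of_le ha]
    exact intervalIntegral.intervalIntegrable_rpow' (by linarith)
  calc ∫⁻ r in Set.Ioo 0 a, ENNReal.ofReal r ^ (κ - 1)
      = ∫⁻ r in Set.Ioo 0 a, ENNReal.ofReal (r ^ (κ - 1)) :=
        setLIntegral_congr_fun measurableSet_Ioo fun r hr => ENNReal.ofReal_rpow_of_pos hr.1
    _ = ENNReal.ofReal (∫ r in Set.Ioo 0 a, r ^ (κ - 1)) :=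
        (ofReal_integral_eq_lintegral_ofReal hint <| ae_restrict_of_forall_mem measurableSet_Ioo
          fun r hr => Real.rpow_nonneg hr.1.le _).symm
    _ = ENNReal.ofReal (κ⁻¹ * a ^ κ) := by
        rw [← integral_Ioc_eq_integral_Ioo, ← intervalIntegral.integral_of_le ha,
          integral_rpow (by left; linarith), sub_add_cancel, Real.zero_rpow hκ.ne', sub_zero,
          inv_mul_eq_div]
    _ = ENNReal.ofReal κ⁻¹ * ENNReal.ofReal a ^ κ := by
        rw [ENNReal.ofReal_mul (by positivity), ENNReal.ofReal_rpow_of_nonneg ha hκ.le]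

theorem lintegral_Ioi_rpow (hκ : 0 < κ) (ha : 0 < a) :
    ∫⁻ r in Set.Ioi a, ENNReal.ofReal r ^ (-κ - 1) =
      ENNReal.ofReal κ⁻¹ * ENNReal.ofReal a ^ (-κ) := by
  calc ∫⁻ r in Set.Ioi a, ENNReal.ofReal r ^ (-κ - 1)
      = ∫⁻ r in Set.Ioi a, ENNReal.ofReal (r ^ (-κ - 1)) :=
        setLIntegral_congr_fun measurableSet_Ioi fun r hr =>
          ENNReal.ofReal_rpow_of_pos (ha.trans hr)
    _ = ENNReal.ofReal (∫ r in Set.Ioi a, r ^ (-κ - 1)) :=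
        (ofReal_integral_eq_lintegral_ofReal (integrableOn_Ioi_rpow_of_lt (by linarith) ha) <|
          ae_restrict_of_forall_mem measurableSet_Ioi
            fun r hr => Real.rpow_nonneg (ha.trans hr).le _).symm
    _ = ENNReal.ofReal (κ⁻¹ * a ^ (-κ)) := by
        rw [integral_Ioi_rpow_of_lt (by linarith) ha, sub_add_cancel, neg_div_neg_eq,
          inv_mul_eq_div]
    _ = ENNReal.ofReal κ⁻¹ * ENNReal.ofReal a ^ (-κ) := by
        rw [ENNReal.ofReal_mul (by positivity), ENNReal.ofReal_rpow_of_pos ha]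

theorem lintegral_mul_setLIntegral_comm {X Y : Type*} [MeasurableSpace X] [MeasurableSpace Y]
    {μ : Measure X} {ν : Measure Y} [SFinite μ] [SFinite ν] {T : X → Set Y}
    (hT : MeasurableSet {p : X × Y | p.2 ∈ T p.1}) {w : X → ℝ≥0∞} (hw : AEMeasurable w μ)
    {g : Y → ℝ≥0∞} (hg : AEMeasurable g ν) :
    ∫⁻ r, w r * (∫⁻ x in T r, g x ∂ν) ∂μ = ∫⁻ x, (∫⁻ r in {r | x ∈ T r}, w r ∂μ) * g x ∂ν := by
  let S := {p : X × Y | p.2 ∈ T p.1}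
  calc ∫⁻ r, w r * (∫⁻ x in T r, g x ∂ν) ∂μ
      = ∫⁻ r, ∫⁻ x, S.indicator (fun p => w p.1 * g p.2) (r, x) ∂ν ∂μ := by
        refine lintegral_congr fun r => ?_
        have hTr : MeasurableSet (T r) := measurable_prodMk_left hT
        rw [← lintegral_const_mul'' _ hg.restrict, ← lintegral_indicator hTr]
        rfl
    _ = ∫⁻ x, ∫⁻ r, S.indicator (fun p => w p.1 * g p.2) (r, x) ∂μ ∂ν :=
        lintegral_lintegral_swap ((hw.comp_fst.mul hg.comp_snd).indicator hT)
    _ = ∫⁻ x, (∫⁻ r in {r | x ∈ T r}, w r ∂μ) * g x ∂ν := by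
        refine lintegral_congr fun x => ?_
        have hTx : MeasurableSet {r | x ∈ T r} := measurable_prodMk_right hT
        rw [← lintegral_mul_const'' _ hw.restrict, ← lintegral_indicator hTx]
        rfl

end PowerIntegrals

section LayerCake

variable {X : Type*} [NormedAddCommGroup X] [MeasurableSpace X]
  {μ : Measure X} [SFinite μ] [NullSingletonClass μ] {κ : ℝ} {g : X → ℝ≥0∞}

theorem lintegral_Ioi_mul_setLIntegral_eq {T : ℝ → Set X}
    (hT : MeasurableSet {p : ℝ × X | p.2 ∈ T p.1}) {w : ℝ → ℝ≥0∞} (hw : Measurable w)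
    (hg : AEMeasurable g μ) {c : ℝ≥0∞} (hc : c ≠ ⊤) {W : X → ℝ≥0∞}
    (hW : ∀ x ≠ 0, ∫⁻ r in {r | x ∈ T r} ∩ Set.Ioi 0, w r = c * W x) :
    ∫⁻ r in Set.Ioi (0 : ℝ), w r * ∫⁻ x in T r, g x ∂μ = c * ∫⁻ x, W x * g x ∂μ := by
  rw [lintegral_mul_setLIntegral_comm hT hw.aemeasurable hg, ← lintegral_const_mul' _ _ hc]
  refine lintegral_congr_ae ?_
  filter_upwards [Measure.ae_ne μ 0] with x hx
  rw [Measure.restrict_restrict' measurableSet_Ioi, hW x hx, mul_assoc]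

variable [OpensMeasurableSpace X]

theorem lintegral_Ioi_rpow_mul_setLIntegral_ball (hκ : 0 < κ) (hg : AEMeasurable g μ) :
    ∫⁻ r in Set.Ioi (0 : ℝ), ENNReal.ofReal r ^ (-κ - 1) * ∫⁻ x in Metric.ball 0 r, g x ∂μ =
      ENNReal.ofReal κ⁻¹ * ∫⁻ x, ‖x‖ₑ ^ (-κ) * g x ∂μ := by
  refine lintegral_Ioi_mul_setLIntegral_eq ?_ (by fun_prop) hg (by finiteness) fun x hx => ?_
  · simpa using measurableSet_lt (by fun_prop) (by fun_prop)
  have hset : {r | x ∈ Metric.ball 0 r} ∩ Set.Ioi 0 = Set.Ioi ‖x‖ := by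
    ext r
    simpa using (norm_nonneg x).trans_lt
  rw [hset, lintegral_Ioi_rpow hκ (norm_pos_iff.2 hx), ofReal_norm]

theorem lintegral_Ioi_rpow_mul_setLIntegral_ball_inv (hκ : 0 < κ) (hg : AEMeasurable g μ) :
    ∫⁻ r in Set.Ioi (0 : ℝ), ENNReal.ofReal r ^ (κ - 1) * ∫⁻ x in Metric.ball 0 r⁻¹, g x ∂μ =
      ENNReal.ofReal κ⁻¹ * ∫⁻ x, ‖x‖ₑ ^ (-κ) * g x ∂μ := by
  refine lintegral_Ioi_mul_setLIntegral_eq ?_ (by fun_prop) hg (by finiteness) fun x hx => ?_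
  · simpa using measurableSet_lt (by fun_prop) (by fun_prop)
  have hset : {r | x ∈ Metric.ball 0 r⁻¹} ∩ Set.Ioi 0 = Set.Ioo 0 ‖x‖⁻¹ := by
    ext r
    have : 0 < r → (‖x‖ < r⁻¹ ↔ r < ‖x‖⁻¹) := lt_inv_comm₀ (norm_pos_iff.2 hx)
    simp only [mem_ball_zero_iff, Set.mem_ofPred_eq, Set.mem_inter_iff, Set.mem_Ioi, Set.mem_Ioo]
    tauto
  rw [hset, lintegral_Ioo_rpow hκ (by positivity), ENNReal.ofReal_inv_of_pos (norm_pos_iff.2 hx),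
    ofReal_norm, ENNReal.inv_rpow, ENNReal.rpow_neg]

theorem lintegral_Ioi_rpow_mul_setLIntegral_compl_ball_inv (hκ : 0 < κ) (hg : AEMeasurable g μ) :
    ∫⁻ r in Set.Ioi (0 : ℝ), ENNReal.ofReal r ^ (-κ - 1) * ∫⁻ x in (Metric.ball 0 r⁻¹)ᶜ, g x ∂μ =
      ENNReal.ofReal κ⁻¹ * ∫⁻ x, ‖x‖ₑ ^ κ * g x ∂μ := by
  refine lintegral_Ioi_mul_setLIntegral_eq ?_ (by fun_prop) hg (by finiteness) fun x hx => ?_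
  · simpa using measurableSet_le (by fun_prop) (by fun_prop)
  have hset : {r | x ∈ (Metric.ball 0 r⁻¹)ᶜ} ∩ Set.Ioi 0 = Set.Ici ‖x‖⁻¹ := by
    ext r
    have hpos : ‖x‖⁻¹ ≤ r → 0 < r := (inv_pos.2 (norm_pos_iff.2 hx)).trans_le
    have : 0 < r → (r⁻¹ ≤ ‖x‖ ↔ ‖x‖⁻¹ ≤ r) := fun h => inv_le_comm₀ h (norm_pos_iff.2 hx)
    simp only [Set.mem_compl_iff, mem_ball_zero_iff, not_lt, Set.mem_ofPred_eq, Set.mem_inter_iff,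
      Set.mem_Ioi, Set.mem_Ici]
    tauto
  rw [hset, ← restrict_Ioi_eq_restrict_Ici, lintegral_Ioi_rpow hκ (by positivity),
    ENNReal.ofReal_inv_of_pos (norm_pos_iff.2 hx), ofReal_norm, ENNReal.inv_rpow,
    ENNReal.rpow_neg, inv_inv]

end LayerCake

section Pitt

theorem enorm_add_sq_le {F : Type*} [TopologicalSpace F] [ESeminormedAddMonoid F]
    (a b : F) : ‖a + b‖ₑ ^ 2 ≤ 2 * (‖a‖ₑ ^ 2 + ‖b‖ₑ ^ 2) :=
  calc ‖a + b‖ₑ ^ 2 ≤ (‖a‖ₑ + ‖b‖ₑ) ^ 2 := by gcongr; exact enorm_add_le a b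
    _ ≤ 2 * (‖a‖ₑ ^ 2 + ‖b‖ₑ ^ 2) := by
      simpa [show (2 : ℝ) - 1 = 1 by norm_num] using
        ENNReal.rpow_add_le_mul_rpow_add_rpow ‖a‖ₑ ‖b‖ₑ one_le_two

theorem lintegral_mul_sq_le {X : Type*} [MeasurableSpace X] {μ : Measure X} {u v : X → ℝ≥0∞}
    (hu : AEMeasurable u μ) (hv : AEMeasurable v μ) :
    (∫⁻ x, u x * v x ∂μ) ^ 2 ≤ (∫⁻ x, u x ^ 2 ∂μ) * ∫⁻ x, v x ^ 2 ∂μ := by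
  have h := ENNReal.lintegral_mul_le_Lp_mul_Lq μ Real.HolderConjugate.two_two hu hv
  calc (∫⁻ x, u x * v x ∂μ) ^ 2
      ≤ ((∫⁻ x, u x ^ (2 : ℝ) ∂μ) ^ (1 / 2 : ℝ) * (∫⁻ x, v x ^ (2 : ℝ) ∂μ) ^ (1 / 2 : ℝ)) ^ 2 := by
        gcongr
        exact h
    _ = _ := by
        simp_rw [mul_pow, ← ENNReal.rpow_two, ← ENNReal.rpow_mul]
        norm_num

theorem setLIntegral_enorm_sq_le_mul {X F : Type*} [NormedAddCommGroup X] [MeasurableSpace X]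
    [OpensMeasurableSpace X] {μ : Measure X} [NullSingletonClass μ] [NormedAddCommGroup F]
    {f : X → F} (hf : AEStronglyMeasurable f μ) (S : Set X) (β : ℝ) :
    (∫⁻ x in S, ‖f x‖ₑ ∂μ) ^ 2 ≤
      (∫⁻ x in S, ‖x‖ₑ ^ (-β) ∂μ) * ∫⁻ x in S, ‖x‖ₑ ^ β * ‖f x‖ₑ ^ 2 ∂μ :=
  calc (∫⁻ x in S, ‖f x‖ₑ ∂μ) ^ 2
      = (∫⁻ x in S, ‖x‖ₑ ^ (-(β / 2)) * (‖x‖ₑ ^ (β / 2) * ‖f x‖ₑ) ∂μ) ^ 2 := by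
        congr 1
        refine lintegral_congr_ae (ae_restrict_of_ae ?_)
        filter_upwards [Measure.ae_ne μ 0] with x hx
        rw [← mul_assoc, ← ENNReal.rpow_add _ _ (by simpa) (by simp), neg_add_cancel,
          ENNReal.rpow_zero, one_mul]
    _ ≤ (∫⁻ x in S, (‖x‖ₑ ^ (-(β / 2))) ^ 2 ∂μ) *
          ∫⁻ x in S, (‖x‖ₑ ^ (β / 2) * ‖f x‖ₑ) ^ 2 ∂μ :=
        lintegral_mul_sq_le (by fun_prop) (by have := hf.enorm.restrict (s := S); fun_prop)
    _ = _ := by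
        simp_rw [mul_pow, ← ENNReal.rpow_mul_natCast]
        norm_num

section Haar

variable {X : Type*} [NormedAddCommGroup X] [NormedSpace ℝ X] [FiniteDimensional ℝ X]
  [MeasurableSpace X] [BorelSpace X] (μ : Measure X) [μ.IsAddHaarMeasure] {β ρ : ℝ}

open Module (finrank)

theorem addHaar_ball_eq_rpow {r : ℝ} (hr : 0 < r) :
    μ (Metric.ball 0 r) = ENNReal.ofReal r ^ (finrank ℝ X : ℝ) * μ (Metric.ball 0 1) := by
  rw [Measure.addHaar_ball_of_pos μ _ hr, ENNReal.ofReal_pow hr.le, ENNReal.rpow_natCast]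

theorem lintegral_Ioi_rpow_mul_addHaar_ball_inter_le (hβ : 0 < β) (hβd : β < finrank ℝ X)
    (hρ : 0 < ρ) :
    ∫⁻ r in Set.Ioi 0, ENNReal.ofReal r ^ (-β - 1) * μ (Metric.ball 0 r ∩ Metric.ball 0 ρ) ≤
      (ENNReal.ofReal (finrank ℝ X - β)⁻¹ + ENNReal.ofReal β⁻¹) * μ (Metric.ball 0 1) *
        ENNReal.ofReal ρ ^ (finrank ℝ X - β) := by
  set d : ℝ := (finrank ℝ X : ℝ)
  set V := μ (Metric.ball 0 1)
  have hsmall : ∫⁻ r in Set.Ioo 0 ρ, ENNReal.ofReal r ^ (-β - 1) *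
      μ (Metric.ball 0 r ∩ Metric.ball 0 ρ) ≤
        ENNReal.ofReal (d - β)⁻¹ * ENNReal.ofReal ρ ^ (d - β) * V := by
    rw [← lintegral_Ioo_rpow (sub_pos.2 hβd) hρ.le,
      ← lintegral_mul_const' _ _ measure_ball_lt_top.ne]
    refine setLIntegral_mono' measurableSet_Ioo fun r hr => ?_
    rw [show d - β - 1 = (-β - 1) + d by ring, ENNReal.rpow_add _ _ (by simp [hr.1]) (by simp),
      mul_assoc, ← addHaar_ball_eq_rpow μ hr.1]
    gcongr
    exact Set.inter_subset_left
  have hlarge : ∫⁻ r in Set.Ici ρ, ENNReal.ofReal r ^ (-β - 1) *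
      μ (Metric.ball 0 r ∩ Metric.ball 0 ρ) ≤
        ENNReal.ofReal β⁻¹ * ENNReal.ofReal ρ ^ (d - β) * V := by
    rw [show d - β = -β + d by ring, ENNReal.rpow_add _ _ (by simp [hρ]) (by simp), ← mul_assoc,
      ← lintegral_Ioi_rpow hβ hρ, mul_assoc, ← addHaar_ball_eq_rpow μ hρ,
      restrict_Ioi_eq_restrict_Ici, ← lintegral_mul_const' _ _ measure_ball_lt_top.ne]
    gcongr
    exact Set.inter_subset_right
  rw [← Set.Ioo_union_Ici_eq_Ioi hρ]
  exact (lintegral_union_le _ _ _).trans ((add_le_add hsmall hlarge).trans_eq (by ring))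

theorem exists_setLIntegral_ball_rpow_neg_le (hβ : 0 < β) (hβd : β < finrank ℝ X) :
    ∃ K : ℝ≥0, ∀ ρ : ℝ, 0 < ρ →
      ∫⁻ x in Metric.ball 0 ρ, ‖x‖ₑ ^ (-β) ∂μ ≤ K * ENNReal.ofReal ρ ^ (finrank ℝ X - β) := by
  have : Nontrivial X := Module.nontrivial_of_finrank_pos (R := ℝ) (by exact_mod_cast hβ.trans hβd)
  set A := (ENNReal.ofReal (finrank ℝ X - β)⁻¹ + ENNReal.ofReal β⁻¹) * μ (Metric.ball 0 1)
  have hA : A ≠ ⊤ := ENNReal.mul_ne_top (by finiteness) measure_ball_lt_top.ne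
  refine ⟨(ENNReal.ofReal β * A).toNNReal, fun ρ hρ => ?_⟩
  have hcake := lintegral_Ioi_rpow_mul_setLIntegral_ball (μ := μ.restrict (Metric.ball 0 ρ)) hβ
    (g := 1) aemeasurable_const
  simp only [Pi.one_apply, setLIntegral_one, mul_one,
    Measure.restrict_apply Metric.isOpen_ball.measurableSet] at hcake
  calc ∫⁻ x in Metric.ball 0 ρ, ‖x‖ₑ ^ (-β) ∂μ
      = ENNReal.ofReal β * ∫⁻ r in Set.Ioi 0, ENNReal.ofReal r ^ (-β - 1) *
          μ (Metric.ball 0 r ∩ Metric.ball 0 ρ) := by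
        rw [hcake, ← mul_assoc, ← ENNReal.ofReal_mul hβ.le, mul_inv_cancel₀ hβ.ne',
          ENNReal.ofReal_one, one_mul]
    _ ≤ ENNReal.ofReal β * (A * ENNReal.ofReal ρ ^ (finrank ℝ X - β)) := by
        gcongr
        exact lintegral_Ioi_rpow_mul_addHaar_ball_inter_le μ hβ hβd hρ
    _ = _ := by rw [ENNReal.coe_toNNReal (by finiteness), ← mul_assoc]

end Haar

variable {E : Type*} [NormedAddCommGroup E] [InnerProductSpace ℝ E] [FiniteDimensional ℝ E]
  [MeasurableSpace E] [BorelSpace E] {f : E → ℂ}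

theorem enorm_fourier_le_lintegral (f : E → ℂ) (ξ : E) : ‖𝓕 f ξ‖ₑ ≤ ∫⁻ x, ‖f x‖ₑ := by
  rw [Real.fourier_eq]
  refine (enorm_integral_le_lintegral_enorm _).trans_eq (lintegral_congr fun x => ?_)
  rw [← ofReal_norm, Circle.norm_smul, ofReal_norm]

theorem fourier_add_of_integrable {g : E → ℂ} (hf : Integrable f) (hg : Integrable g) :
    𝓕 (f + g) = 𝓕 f + 𝓕 g :=
  VectorFourier.fourierIntegral_add (L := innerₗ E) Real.continuous_fourierChar
    (by exact continuous_inner) hf hg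

theorem setLIntegral_enorm_fourier_sq_le (hf : Integrable f) (A : Set E) {S : Set E}
    (hS : MeasurableSet S) :
    ∫⁻ ξ in A, ‖𝓕 f ξ‖ₑ ^ 2 ≤
      2 * (volume A * (∫⁻ x in S, ‖f x‖ₑ) ^ 2 + ∫⁻ x in Sᶜ, ‖f x‖ₑ ^ 2) := by
  have hsplit : 𝓕 f = 𝓕 (S.indicator f) + 𝓕 (Sᶜ.indicator f) := by
    rw [← fourier_add_of_integrable (hf.indicator hS) (hf.indicator hS.compl),
      Set.indicator_self_add_compl]
  have hnear : ∀ ξ, ‖𝓕 (S.indicator f) ξ‖ₑ ≤ ∫⁻ x in S, ‖f x‖ₑ := fun ξ => by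
    refine (enorm_fourier_le_lintegral _ ξ).trans_eq ?_
    simp_rw [enorm_indicator_eq_indicator_enorm, lintegral_indicator hS]
  have hfar : ∫⁻ ξ, ‖𝓕 (Sᶜ.indicator f) ξ‖ₑ ^ 2 ≤ ∫⁻ x in Sᶜ, ‖f x‖ₑ ^ 2 := by
    refine (lintegral_enorm_fourier_sq_le _).trans_eq ?_
    rw [← lintegral_indicator hS.compl]
    refine lintegral_congr fun x => ?_
    by_cases hx : x ∈ Sᶜ <;> simp [hx]
  calc ∫⁻ ξ in A, ‖𝓕 f ξ‖ₑ ^ 2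
      ≤ ∫⁻ ξ in A, 2 * ((∫⁻ x in S, ‖f x‖ₑ) ^ 2 + ‖𝓕 (Sᶜ.indicator f) ξ‖ₑ ^ 2) := by
        refine lintegral_mono fun ξ => ?_
        rw [hsplit]
        refine (enorm_add_sq_le _ _).trans ?_
        gcongr
        exact hnear ξ
    _ = 2 * (volume A * (∫⁻ x in S, ‖f x‖ₑ) ^ 2 + ∫⁻ ξ in A, ‖𝓕 (Sᶜ.indicator f) ξ‖ₑ ^ 2) := by
        rw [lintegral_const_mul' _ _ (by finiteness), lintegral_add_left measurable_const,
          setLIntegral_const, mul_comm (volume A)]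
    _ ≤ _ := by
        gcongr 2 * (_ + ?_)
        exact (setLIntegral_le_lintegral _ _).trans hfar

theorem exists_setLIntegral_ball_enorm_fourier_sq_le {β : ℝ} (hβ : 0 < β)
    (hβd : β < Module.finrank ℝ E) :
    ∃ K : ℝ≥0, ∀ f : E → ℂ, Integrable f → ∀ r : ℝ, 0 < r →
      ∫⁻ ξ in Metric.ball 0 r, ‖𝓕 f ξ‖ₑ ^ 2 ≤
        2 * (K * ENNReal.ofReal r ^ β * (∫⁻ x in Metric.ball 0 r⁻¹, ‖x‖ₑ ^ β * ‖f x‖ₑ ^ 2) +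
          ∫⁻ x in (Metric.ball 0 r⁻¹)ᶜ, ‖f x‖ₑ ^ 2) := by
  have : Nontrivial E := Module.nontrivial_of_finrank_pos (R := ℝ) (by exact_mod_cast hβ.trans hβd)
  obtain ⟨K, hK⟩ := exists_setLIntegral_ball_rpow_neg_le (volume : Measure E) hβ hβd
  set d : ℝ := (Module.finrank ℝ E : ℝ)
  set V := volume (Metric.ball (0 : E) 1)
  have hV : V ≠ ⊤ := measure_ball_lt_top.ne
  refine ⟨V.toNNReal * K, fun f hf r hr =>
    (setLIntegral_enorm_fourier_sq_le hf _ (S := Metric.ball 0 r⁻¹)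
      Metric.isOpen_ball.measurableSet).trans ?_⟩
  gcongr 2 * (?_ + _)
  have hr0 : ENNReal.ofReal r ≠ 0 := by simpa using hr
  calc volume (Metric.ball (0 : E) r) * (∫⁻ x in Metric.ball 0 r⁻¹, ‖f x‖ₑ) ^ 2
      ≤ (ENNReal.ofReal r ^ d * V) * ((K * ENNReal.ofReal r⁻¹ ^ (d - β)) *
          ∫⁻ x in Metric.ball 0 r⁻¹, ‖x‖ₑ ^ β * ‖f x‖ₑ ^ 2) := by
        rw [addHaar_ball_eq_rpow volume hr]
        gcongr
        refine (setLIntegral_enorm_sq_le_mul hf.aestronglyMeasurable _ β).trans ?_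
        gcongr
        exact hK _ (inv_pos.2 hr)
    _ = _ := by
        rw [ENNReal.ofReal_inv_of_pos hr, ENNReal.inv_rpow, ← ENNReal.rpow_neg,
          show β = d + -(d - β) by ring, ENNReal.rpow_add _ _ hr0 (by simp),
          ENNReal.coe_mul, ENNReal.coe_toNNReal hV]
        ring_nf

theorem aemeasurable_setLIntegral_compl_ball_inv {X : Type*} [PseudoMetricSpace X]
    [MeasurableSpace X] (μ : Measure X) (x₀ : X) (g : X → ℝ≥0∞) :
    AEMeasurable (fun r : ℝ => ∫⁻ x in (Metric.ball x₀ r⁻¹)ᶜ, g x ∂μ)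
      (volume.restrict (Set.Ioi 0)) :=
  aemeasurable_restrict_of_monotoneOn measurableSet_Ioi fun _ hr _ _ hrs =>
    lintegral_mono_set <| Set.compl_subset_compl.2 <|
      Metric.ball_subset_ball <| inv_anti₀ hr hrs

/-- **Pitt's inequality** in `L²`. The mass of `𝓕 f` in the ball of radius `r` is estimated by
splitting `f` at the radius `r⁻¹`; integrating over `r` then produces both weights. -/
theorem exists_lintegral_rpow_neg_mul_enorm_fourier_sq_le {α : ℝ} (hα : 0 < α)
    (hαd : α < Module.finrank ℝ E) :
    ∃ C : ℝ≥0, ∀ f : E → ℂ, Integrable f →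
      ∫⁻ ξ, ‖ξ‖ₑ ^ (-α) * ‖𝓕 f ξ‖ₑ ^ 2 ≤ C * ∫⁻ x, ‖x‖ₑ ^ α * ‖f x‖ₑ ^ 2 := by
  have : Nontrivial E := Module.nontrivial_of_finrank_pos (R := ℝ) (by exact_mod_cast hα.trans hαd)
  obtain ⟨β, hαβ, hβd⟩ := exists_between hαd
  obtain ⟨K, hK⟩ := exists_setLIntegral_ball_enorm_fourier_sq_le (hα.trans hαβ) hβd
  let c (t : ℝ) : ℝ≥0∞ := ENNReal.ofReal t
  refine ⟨(c α * (2 * (K * c (β - α)⁻¹ + c α⁻¹))).toNNReal, fun f hf => ?_⟩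
  rw [ENNReal.coe_toNNReal (by finiteness)]
  have hf2 : AEMeasurable (fun x => ‖f x‖ₑ ^ 2) := hf.aestronglyMeasurable.enorm.pow_const 2
  have hnear : ∫⁻ r in Set.Ioi 0, c r ^ (β - α - 1) *
      ∫⁻ x in Metric.ball 0 r⁻¹, ‖x‖ₑ ^ β * ‖f x‖ₑ ^ 2 =
        c (β - α)⁻¹ * ∫⁻ x, ‖x‖ₑ ^ α * ‖f x‖ₑ ^ 2 := by
    rw [lintegral_Ioi_rpow_mul_setLIntegral_ball_inv (sub_pos.2 hαβ) (by fun_prop)]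
    congr 1
    refine lintegral_congr_ae ?_
    filter_upwards [Measure.ae_ne volume 0] with x hx
    rw [← mul_assoc, ← ENNReal.rpow_add _ _ (by simpa) (by simp)]
    ring_nf
  have hfar := lintegral_Ioi_rpow_mul_setLIntegral_compl_ball_inv hα hf2
  have hfarmeas : AEMeasurable (fun r : ℝ => c r ^ (-α - 1) *
      ∫⁻ x in (Metric.ball 0 r⁻¹)ᶜ, ‖f x‖ₑ ^ 2) (volume.restrict (Set.Ioi 0)) :=
    .mul (by fun_prop) (aemeasurable_setLIntegral_compl_ball_inv volume 0 _)
  calc ∫⁻ ξ, ‖ξ‖ₑ ^ (-α) * ‖𝓕 f ξ‖ₑ ^ 2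
      = c α * ∫⁻ r in Set.Ioi 0, c r ^ (-α - 1) * ∫⁻ ξ in Metric.ball 0 r, ‖𝓕 f ξ‖ₑ ^ 2 := by
        have := (continuous_fourier_of_integrable hf).measurable
        rw [lintegral_Ioi_rpow_mul_setLIntegral_ball hα (by fun_prop), ← mul_assoc,
          ← ENNReal.ofReal_mul hα.le, mul_inv_cancel₀ hα.ne', ENNReal.ofReal_one, one_mul]
    _ ≤ c α * ∫⁻ r in Set.Ioi 0, 2 * (K * (c r ^ (β - α - 1) *
          ∫⁻ x in Metric.ball 0 r⁻¹, ‖x‖ₑ ^ β * ‖f x‖ₑ ^ 2) +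
            c r ^ (-α - 1) * ∫⁻ x in (Metric.ball 0 r⁻¹)ᶜ, ‖f x‖ₑ ^ 2) := by
        gcongr c α * ?_
        refine setLIntegral_mono' measurableSet_Ioi fun r hr => ?_
        rw [show β - α - 1 = (-α - 1) + β by ring,
          ENNReal.rpow_add _ _ (by simpa [c] using hr) (by simp [c])]
        refine (mul_le_mul_right (hK f hf r hr) _).trans_eq (by ring)
    _ = c α * (2 * (K * (c (β - α)⁻¹ * ∫⁻ x, ‖x‖ₑ ^ α * ‖f x‖ₑ ^ 2) +
          c α⁻¹ * ∫⁻ x, ‖x‖ₑ ^ α * ‖f x‖ₑ ^ 2)) := by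
        rw [lintegral_const_mul' _ _ (by finiteness), lintegral_add_right' _ hfarmeas,
          lintegral_const_mul' _ _ (by finiteness), hnear, hfar]
    _ = _ := by ring

end Pitt

section PhaseDiff

/-- The factor `e ^ (-2πis) - 1` by which a translation difference `f (· + z) - f` acts on the
other side of the Fourier transform, at the points where the inner product with `z` is `s`. -/
def phaseDiff (s : ℝ) : ℂ := 𝐞 (-s) - 1

theorem continuous_phaseDiff : Continuous phaseDiff := by
  unfold phaseDiff
  fun_prop

theorem norm_phaseDiff (s : ℝ) : ‖phaseDiff s‖ = 2 * |Real.sin (π * s)| := by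
  rw [phaseDiff, Real.fourierChar_apply, show ((2 * π * -s : ℝ) : ℂ) * I =
      I * ((-(2 * (π * s)) : ℝ) : ℂ) by push_cast; ring, norm_exp_I_mul_ofReal_sub_one]
  rw [show -(2 * (π * s)) / 2 = -(π * s) by ring, Real.sin_neg, mul_neg, norm_neg, norm_mul]
  simp

theorem enorm_phaseDiff_le (s : ℝ) : ‖phaseDiff s‖ₑ ≤ 8 * min 1 ‖s‖ₑ := by
  have hnorm : ‖phaseDiff s‖ ≤ 8 * min 1 ‖s‖ := by
    rw [norm_phaseDiff, mul_min_of_nonneg _ _ (by norm_num), Real.norm_eq_abs]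
    refine le_min ?_ ?_
    · linarith [Real.abs_sin_le_one (π * s)]
    · have hsin : |Real.sin (π * s)| ≤ π * |s| :=
        Real.abs_sin_le_abs.trans_eq (by rw [abs_mul, abs_of_pos Real.pi_pos])
      nlinarith [Real.pi_le_four, abs_nonneg s]
  rw [← ofReal_norm, ← ofReal_norm, ← ENNReal.ofReal_one, ← ENNReal.ofReal_min,
    show (8 : ℝ≥0∞) = ENNReal.ofReal 8 by simp, ← ENNReal.ofReal_mul (by norm_num)]
  exact ENNReal.ofReal_le_ofReal hnorm

theorem enorm_le_enorm_phaseDiff {s : ℝ} (hs : |s| ≤ 1 / 2) : ‖s‖ₑ ≤ ‖phaseDiff s‖ₑ := by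
  rw [enorm_le_iff_norm_le, norm_phaseDiff, Real.norm_eq_abs]
  have hsin := Real.mul_abs_le_abs_sin (x := π * s) (by
    rw [abs_mul, abs_of_pos Real.pi_pos]
    nlinarith [Real.pi_pos])
  rw [abs_mul, abs_of_pos Real.pi_pos, ← mul_assoc, div_mul_cancel₀ _ Real.pi_ne_zero] at hsin
  linarith [abs_nonneg s]

variable {E : Type*} [NormedAddCommGroup E] [InnerProductSpace ℝ E] [FiniteDimensional ℝ E]
  [MeasurableSpace E] [BorelSpace E] {f : E → ℂ}

theorem fourier_add_sub_fourier (hf : Integrable f) (ξ z : E) :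
    𝓕 f (ξ + z) - 𝓕 f ξ = 𝓕 (fun x => phaseDiff ⟪x, z⟫ * f x) ξ := by
  simp only [Real.fourier_eq]
  rw [← integral_sub ((Real.fourierIntegral_convergent_iff _).2 hf)
    ((Real.fourierIntegral_convergent_iff _).2 hf)]
  refine integral_congr_ae (.of_forall fun x => ?_)
  simp only [phaseDiff, Circle.smul_def, inner_add_right, neg_add, AddChar.map_add_eq_mul,
    Circle.coe_mul, smul_eq_mul]
  ring

theorem phaseDiff_mul_fourierInv {G : E → ℂ} (hG : Integrable G) (x z : E) :
    phaseDiff ⟪x, z⟫ * 𝓕⁻ G x = 𝓕⁻ (fun ξ => G (ξ + z) - G ξ) x := by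
  have hconv {g : E → ℂ} (hg : Integrable g) : Integrable fun ξ => 𝐞 ⟪ξ, x⟫ • g ξ := by
    simpa using (Real.fourierIntegral_convergent_iff (-x)).2 hg
  have hshift : ∫ ξ, 𝐞 ⟪ξ, x⟫ • G (ξ + z) = 𝐞 (-⟪x, z⟫) * ∫ ξ, 𝐞 ⟪ξ, x⟫ • G ξ := by
    rw [← integral_const_mul, ← integral_add_right_eq_self (fun ξ => _ * 𝐞 ⟪ξ, x⟫ • G ξ) z]
    refine integral_congr_ae (.of_forall fun ξ => ?_)
    simp only [Circle.smul_def, smul_eq_mul, ← mul_assoc, ← Circle.coe_mul,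
      ← AddChar.map_add_eq_mul, inner_add_left, real_inner_comm z x]
    ring_nf
  simp only [Real.fourierInv_eq, smul_sub]
  rw [integral_sub (hconv (hG.comp_add_right z)) (hconv hG), hshift, phaseDiff, sub_mul, one_mul]

end PhaseDiff

section FractionalMeasure

variable {α : ℝ}

theorem lintegral_Ioi_rpow_mul_min_sq (hα0 : 0 < α) (hα2 : α < 2) {ρ : ℝ} (hρ : 0 < ρ) :
    ∫⁻ t in Set.Ioi 0, ENNReal.ofReal t ^ (-α - 1) * min 1 (‖t‖ₑ * ENNReal.ofReal ρ) ^ 2 ≤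
      ENNReal.ofReal ((2 - α)⁻¹ + α⁻¹) * ENNReal.ofReal ρ ^ α := by
  have hρ0 : ENNReal.ofReal ρ ≠ 0 := by simpa using hρ
  have hsmall : ∫⁻ t in Set.Ioo 0 ρ⁻¹, ENNReal.ofReal t ^ (-α - 1) *
      min 1 (‖t‖ₑ * ENNReal.ofReal ρ) ^ 2 ≤
        ENNReal.ofReal (2 - α)⁻¹ * ENNReal.ofReal ρ ^ α := by
    calc ∫⁻ t in Set.Ioo 0 ρ⁻¹, ENNReal.ofReal t ^ (-α - 1) * min 1 (‖t‖ₑ * ENNReal.ofReal ρ) ^ 2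
        ≤ ∫⁻ t in Set.Ioo 0 ρ⁻¹, ENNReal.ofReal t ^ ((2 - α) - 1) * ENNReal.ofReal ρ ^ 2 := by
          refine setLIntegral_mono' measurableSet_Ioo fun t ht => ?_
          rw [show (2 - α) - 1 = (-α - 1) + (2 : ℕ) by push_cast; ring,
            ENNReal.rpow_add _ _ (by simp [ht.1]) (by simp), ENNReal.rpow_natCast, mul_assoc,
            ← mul_pow, ← Real.enorm_of_nonneg ht.1.le]
          gcongr
          exact min_le_right _ _
      _ = ENNReal.ofReal (2 - α)⁻¹ * ENNReal.ofReal ρ ^ α := by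
          rw [lintegral_mul_const' _ _ (by finiteness), lintegral_Ioo_rpow (by linarith)
            (by positivity), ENNReal.ofReal_inv_of_pos hρ, ENNReal.inv_rpow, ← ENNReal.rpow_neg,
            mul_assoc, ← ENNReal.rpow_natCast, ← ENNReal.rpow_add _ _ hρ0 (by simp)]
          norm_num
  have hlarge : ∫⁻ t in Set.Ici ρ⁻¹, ENNReal.ofReal t ^ (-α - 1) *
      min 1 (‖t‖ₑ * ENNReal.ofReal ρ) ^ 2 ≤
        ENNReal.ofReal α⁻¹ * ENNReal.ofReal ρ ^ α := by
    calc ∫⁻ t in Set.Ici ρ⁻¹, ENNReal.ofReal t ^ (-α - 1) * min 1 (‖t‖ₑ * ENNReal.ofReal ρ) ^ 2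
        ≤ ∫⁻ t in Set.Ici ρ⁻¹, ENNReal.ofReal t ^ (-α - 1) :=
          lintegral_mono fun t => mul_le_of_le_one_right' (pow_le_one' (min_le_left _ _) 2)
      _ = ENNReal.ofReal α⁻¹ * ENNReal.ofReal ρ ^ α := by
          rw [← restrict_Ioi_eq_restrict_Ici, lintegral_Ioi_rpow hα0 (by positivity),
            ENNReal.ofReal_inv_of_pos hρ, ENNReal.inv_rpow, ENNReal.rpow_neg, inv_inv]
  rw [← Set.Ioo_union_Ici_eq_Ioi (inv_pos.2 hρ),
    ENNReal.ofReal_add (inv_pos.2 (sub_pos.2 hα2)).le (inv_pos.2 hα0).le, add_mul]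
  exact (lintegral_union_le _ _ _).trans (add_le_add hsmall hlarge)

theorem mul_lintegral_Ioo_inv_two_mul_rpow (hα2 : α < 2) {s : ℝ} (hs : s ≠ 0) :
    ENNReal.ofReal (2 - α) * 2 ^ (2 - α) * (‖s‖ₑ ^ 2 *
      ∫⁻ t in Set.Ioo 0 (2 * |s|)⁻¹, ENNReal.ofReal t ^ ((2 - α) - 1)) = ‖s‖ₑ ^ α := by
  have h2α : 0 < 2 - α := sub_pos.2 hα2
  have hc : ENNReal.ofReal (2 - α) * ENNReal.ofReal (2 - α)⁻¹ = 1 := by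
    rw [← ENNReal.ofReal_mul h2α.le, mul_inv_cancel₀ h2α.ne', ENNReal.ofReal_one]
  have h2 : (2 : ℝ≥0∞) ^ (2 - α) * 2 ^ (-(2 - α)) = 1 := by
    rw [← ENNReal.rpow_add _ _ (by simp) (by simp), add_neg_cancel, ENNReal.rpow_zero]
  have hpow : ‖s‖ₑ ^ 2 * ‖s‖ₑ ^ (-(2 - α)) = ‖s‖ₑ ^ α := by
    rw [← ENNReal.rpow_two, ← ENNReal.rpow_add _ _ (by simpa) (by simp)]
    ring_nf
  have hend : ENNReal.ofReal (2 * |s|)⁻¹ ^ (2 - α) = 2 ^ (-(2 - α)) * ‖s‖ₑ ^ (-(2 - α)) := by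
    rw [ENNReal.ofReal_inv_of_pos (by positivity), ENNReal.inv_rpow, ← ENNReal.rpow_neg,
      ENNReal.ofReal_mul zero_le_two, ENNReal.mul_rpow_of_ne_top (by simp) (by simp),
      ← Real.enorm_eq_ofReal_abs, ENNReal.ofReal_ofNat]
  rw [lintegral_Ioo_rpow h2α (by positivity), hend]
  calc _ = (ENNReal.ofReal (2 - α) * ENNReal.ofReal (2 - α)⁻¹) *
        (2 ^ (2 - α) * 2 ^ (-(2 - α))) * (‖s‖ₑ ^ 2 * ‖s‖ₑ ^ (-(2 - α))) := by ring
    _ = ‖s‖ₑ ^ α := by rw [hc, h2, hpow, one_mul, one_mul]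

theorem enorm_rpow_le_lintegral_Ioi_rpow_mul_enorm_phaseDiff_sq (hα0 : 0 < α) (hα2 : α < 2)
    (s : ℝ) :
    ‖s‖ₑ ^ α ≤ ENNReal.ofReal (2 - α) * 2 ^ (2 - α) *
      ∫⁻ t in Set.Ioi 0, ENNReal.ofReal t ^ (-α - 1) * ‖phaseDiff (t * s)‖ₑ ^ 2 := by
  rcases eq_or_ne s 0 with rfl | hs
  · simp [hα0]
  calc ‖s‖ₑ ^ α
      = ENNReal.ofReal (2 - α) * 2 ^ (2 - α) * (‖s‖ₑ ^ 2 *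
          ∫⁻ t in Set.Ioo 0 (2 * |s|)⁻¹, ENNReal.ofReal t ^ ((2 - α) - 1)) :=
        (mul_lintegral_Ioo_inv_two_mul_rpow hα2 hs).symm
    _ ≤ _ := by
        gcongr
        rw [← lintegral_const_mul' _ _ (by finiteness)]
        refine (setLIntegral_mono' measurableSet_Ioo fun t ht => ?_).trans
          (lintegral_mono_set Set.Ioo_subset_Ioi_self)
        have hts : |t * s| ≤ 1 / 2 := by
          rw [abs_mul, abs_of_pos ht.1, ← le_div_iff₀ (abs_pos.2 hs), div_div]
          exact ht.2.le.trans_eq (one_div _).symm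
        rw [show (2 - α) - 1 = (-α - 1) + (2 : ℕ) by push_cast; ring,
          ENNReal.rpow_add _ _ (by simp [ht.1]) (by simp), ENNReal.rpow_natCast, mul_left_comm,
          ← mul_pow, ← Real.enorm_of_nonneg ht.1.le, mul_comm ‖s‖ₑ, ← enorm_mul]
        gcongr
        exact enorm_le_enorm_phaseDiff hts

/- The natural choice is `ν = t ^ (-α - 1) dt`. For `α = 2` the first integral would diverge at
`t = 0`; a point mass at a scale too small for `s` to wrap around the circle takes its place, which
is why `s` is restricted to `[-R, R]` and `A` has to be independent of `R`. -/
theorem exists_measure_rpow_comparison (hα0 : 0 < α) (hα2 : α ≤ 2) :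
    ∃ A : ℝ≥0, ∀ R : ℝ, 0 < R → ∃ ν : Measure ℝ, SFinite ν ∧
      (∀ ρ : ℝ≥0∞, ρ ≠ 0 → ρ ≠ ⊤ → ∫⁻ t, min 1 (‖t‖ₑ * ρ) ^ 2 ∂ν ≤ A * ρ ^ α) ∧
      ∀ s : ℝ, |s| ≤ R → ‖s‖ₑ ^ α ≤ A * ∫⁻ t, ‖phaseDiff (t * s)‖ₑ ^ 2 ∂ν := by
  rcases hα2.lt_or_eq with hα2 | rfl
  · refine ⟨((2 - α)⁻¹ + α⁻¹).toNNReal + (ENNReal.ofReal (2 - α) * 2 ^ (2 - α)).toNNReal,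
      fun R _ => ⟨(volume.restrict (Set.Ioi 0)).withDensity fun t => ENNReal.ofReal t ^ (-α - 1),
        inferInstance, fun ρ hρ0 hρ => ?_, fun s _ => ?_⟩⟩
    · rw [lintegral_withDensity_eq_lintegral_mul _ (by fun_prop) (by fun_prop)]
      rw [← ENNReal.ofReal_toReal hρ]
      refine (lintegral_Ioi_rpow_mul_min_sq hα0 hα2 (ENNReal.toReal_pos hρ0 hρ)).trans ?_
      gcongr
      rw [ENNReal.coe_add]
      exact le_self_add
    · have := continuous_phaseDiff.measurable
      rw [lintegral_withDensity_eq_lintegral_mul _ (by fun_prop) (by fun_prop)]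
      refine (enorm_rpow_le_lintegral_Ioi_rpow_mul_enorm_phaseDiff_sq hα0 hα2 s).trans ?_
      rw [ENNReal.coe_add, ENNReal.coe_toNNReal (by finiteness)]
      exact mul_le_mul_left le_add_self _
  · refine ⟨1, fun R hR => ⟨‖2 * R‖ₑ ^ 2 • Measure.dirac (2 * R)⁻¹, inferInstance,
      fun ρ _ _ => ?_, fun s hs => ?_⟩⟩
    · rw [lintegral_smul_measure, lintegral_dirac, smul_eq_mul, ENNReal.coe_one, one_mul,
        ENNReal.rpow_two, ← mul_pow]
      gcongr
      refine (mul_le_mul_right (min_le_right _ _) _).trans_eq ?_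
      rw [← mul_assoc, ← enorm_mul, mul_inv_cancel₀ (by positivity), enorm_one, one_mul]
    · rw [lintegral_smul_measure, lintegral_dirac, smul_eq_mul, ENNReal.coe_one, one_mul,
        ENNReal.rpow_two, ← mul_pow]
      gcongr
      calc ‖s‖ₑ = ‖2 * R‖ₑ * ‖(2 * R)⁻¹ * s‖ₑ := by
            rw [← enorm_mul, mul_inv_cancel_left₀ (by positivity)]
        _ ≤ _ := by
            gcongr
            refine enorm_le_enorm_phaseDiff ?_
            rw [abs_mul, abs_of_pos (by positivity), inv_mul_le_iff₀ (by positivity)]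
            linarith

end FractionalMeasure

section Multiplier

variable {E : Type*} [NormedAddCommGroup E] {q : E → ℂ} {B : ℝ≥0}

/-- A bounded symbol satisfying the first-order Mikhlin condition `‖ξ‖ * ‖∇q ξ‖ ≤ B`, in an
integrated form that asks for no differentiability. -/
structure IsMikhlinSymbol (q : E → ℂ) (B : ℝ≥0) : Prop where
  enorm_le (ξ : E) : ‖q ξ‖ₑ ≤ B
  enorm_mul_enorm_sub_le (ξ η : E) : ‖ξ‖ₑ * ‖q η - q ξ‖ₑ ≤ B * ‖η - ξ‖ₑ

theorem IsMikhlinSymbol.enorm_add_sub_le (hq : IsMikhlinSymbol q B) (ξ z : E) :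
    ‖q (ξ + z) - q ξ‖ₑ ≤ 2 * B * min 1 (‖z‖ₑ * ‖ξ‖ₑ⁻¹) := by
  rcases eq_or_ne z 0 with rfl | hz
  · simp
  have hbound : ‖q (ξ + z) - q ξ‖ₑ ≤ 2 * B := by
    rw [two_mul]
    exact enorm_sub_le.trans (add_le_add (hq.enorm_le _) (hq.enorm_le _))
  rcases eq_or_ne ξ 0 with rfl | hξ
  · simpa [ENNReal.mul_top, hz] using hbound
  rw [mul_min, mul_one]
  refine le_min hbound ?_
  rw [← mul_assoc, ← div_eq_mul_inv,
    ENNReal.le_div_iff_mul_le (.inl (by simpa)) (.inl (by simp)), mul_comm, two_mul, add_mul]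
  exact (hq.enorm_mul_enorm_sub_le ξ (ξ + z)).trans (by simp)

variable [InnerProductSpace ℝ E] [FiniteDimensional ℝ E] [MeasurableSpace E] [BorelSpace E]
  {f : E → ℂ}

/-- The Fourier multiplier `q(D)`, for Mathlib's normalization of the Fourier transform. -/
def fourierMultiplier (q f : E → ℂ) : E → ℂ :=
  𝓕⁻ fun ξ => q ξ * 𝓕 f ξ

theorem continuous_fourierMultiplier (q f : E → ℂ) : Continuous (fourierMultiplier q f) :=
  continuous_fourierInv _

theorem IsMikhlinSymbol.lintegral_enorm_fourierMultiplier_sq_le (hq : IsMikhlinSymbol q B)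
    (f : E → ℂ) : ∫⁻ x, ‖fourierMultiplier q f x‖ₑ ^ 2 ≤ B ^ 2 * ∫⁻ x, ‖f x‖ₑ ^ 2 :=
  calc ∫⁻ x, ‖fourierMultiplier q f x‖ₑ ^ 2
      ≤ ∫⁻ ξ, ‖q ξ * 𝓕 f ξ‖ₑ ^ 2 := lintegral_enorm_fourierInv_sq_le _
    _ ≤ ∫⁻ ξ, B ^ 2 * ‖𝓕 f ξ‖ₑ ^ 2 := by
        refine lintegral_mono fun ξ => ?_
        rw [enorm_mul, mul_pow]
        gcongr
        exact hq.enorm_le ξ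
    _ ≤ B ^ 2 * ∫⁻ x, ‖f x‖ₑ ^ 2 := by
        rw [lintegral_const_mul' _ _ (by finiteness)]
        exact mul_le_mul_right (lintegral_enorm_fourier_sq_le f) _

theorem lintegral_enorm_phaseDiff_mul_sq_le (f : E → ℂ) (z : E) :
    ∫⁻ x, ‖phaseDiff ⟪x, z⟫ * f x‖ₑ ^ 2 ≤
      64 * ∫⁻ x, min 1 (‖z‖ₑ * ‖x‖ₑ) ^ 2 * ‖f x‖ₑ ^ 2 := by
  rw [← lintegral_const_mul' _ _ (by finiteness)]
  refine lintegral_mono fun x => ?_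
  have hinner : ‖⟪x, z⟫‖ₑ ≤ ‖z‖ₑ * ‖x‖ₑ := by
    rw [mul_comm, ← enorm_norm x, ← enorm_norm z, ← enorm_mul]
    exact enorm_le_iff_norm_le.2 ((norm_inner_le_norm x z).trans (le_abs_self _))
  calc ‖phaseDiff ⟪x, z⟫ * f x‖ₑ ^ 2 = (‖phaseDiff ⟪x, z⟫‖ₑ * ‖f x‖ₑ) ^ 2 := by rw [enorm_mul]
    _ ≤ ((8 * min 1 (‖z‖ₑ * ‖x‖ₑ)) * ‖f x‖ₑ) ^ 2 := by
      gcongr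
      exact (enorm_phaseDiff_le _).trans (by gcongr)
    _ = 64 * (min 1 (‖z‖ₑ * ‖x‖ₑ) ^ 2 * ‖f x‖ₑ ^ 2) := by ring

theorem IsMikhlinSymbol.lintegral_enorm_phaseDiff_mul_fourierMultiplier_sq_le
    (hq : IsMikhlinSymbol q B) (hf : Integrable f) (z : E) :
    ∫⁻ x, ‖phaseDiff ⟪x, z⟫ * fourierMultiplier q f x‖ₑ ^ 2 ≤
      128 * B ^ 2 * ((∫⁻ x, min 1 (‖z‖ₑ * ‖x‖ₑ) ^ 2 * ‖f x‖ₑ ^ 2) +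
        ∫⁻ ξ, min 1 (‖z‖ₑ * ‖ξ‖ₑ⁻¹) ^ 2 * ‖𝓕 f ξ‖ₑ ^ 2) := by
  by_cases hG : Integrable fun ξ => q ξ * 𝓕 f ξ
  swap
  · simp [fourierMultiplier, fourierInv_eq_zero_of_not_integrable hG]
  have hmeas := (continuous_fourier_of_integrable hf).measurable
  let fz (x : E) : ℂ := phaseDiff ⟪x, z⟫ * f x
  have hleibniz (ξ : E) : q (ξ + z) * 𝓕 f (ξ + z) - q ξ * 𝓕 f ξ =
      q (ξ + z) * 𝓕 fz ξ + (q (ξ + z) - q ξ) * 𝓕 f ξ := by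
    rw [← fourier_add_sub_fourier hf]
    ring
  have hfz : ∫⁻ ξ, ‖𝓕 fz ξ‖ₑ ^ 2 ≤ 64 * ∫⁻ x, min 1 (‖z‖ₑ * ‖x‖ₑ) ^ 2 * ‖f x‖ₑ ^ 2 :=
    (lintegral_enorm_fourier_sq_le fz).trans (lintegral_enorm_phaseDiff_mul_sq_le f z)
  calc ∫⁻ x, ‖phaseDiff ⟪x, z⟫ * fourierMultiplier q f x‖ₑ ^ 2
      ≤ ∫⁻ ξ, ‖q (ξ + z) * 𝓕 fz ξ + (q (ξ + z) - q ξ) * 𝓕 f ξ‖ₑ ^ 2 := by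
        simp_rw [fourierMultiplier, phaseDiff_mul_fourierInv hG, hleibniz]
        exact lintegral_enorm_fourierInv_sq_le _
    _ ≤ ∫⁻ ξ, (2 * B ^ 2 * ‖𝓕 fz ξ‖ₑ ^ 2 +
          8 * B ^ 2 * (min 1 (‖z‖ₑ * ‖ξ‖ₑ⁻¹) ^ 2 * ‖𝓕 f ξ‖ₑ ^ 2)) := by
        refine lintegral_mono fun ξ => (enorm_add_sq_le _ _).trans ?_
        rw [enorm_mul, enorm_mul]
        calc 2 * ((‖q (ξ + z)‖ₑ * ‖𝓕 fz ξ‖ₑ) ^ 2 + (‖q (ξ + z) - q ξ‖ₑ * ‖𝓕 f ξ‖ₑ) ^ 2)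
            ≤ 2 * ((B * ‖𝓕 fz ξ‖ₑ) ^ 2 +
                ((2 * B * min 1 (‖z‖ₑ * ‖ξ‖ₑ⁻¹)) * ‖𝓕 f ξ‖ₑ) ^ 2) := by
              gcongr
              · exact hq.enorm_le _
              · exact hq.enorm_add_sub_le ξ z
          _ = _ := by ring
    _ = 2 * B ^ 2 * (∫⁻ ξ, ‖𝓕 fz ξ‖ₑ ^ 2) +
          8 * B ^ 2 * ∫⁻ ξ, min 1 (‖z‖ₑ * ‖ξ‖ₑ⁻¹) ^ 2 * ‖𝓕 f ξ‖ₑ ^ 2 := by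
        rw [lintegral_add_right _ (by fun_prop), lintegral_const_mul' _ _ (by finiteness),
          lintegral_const_mul' _ _ (by finiteness)]
    _ ≤ 2 * B ^ 2 * (64 * ∫⁻ x, min 1 (‖z‖ₑ * ‖x‖ₑ) ^ 2 * ‖f x‖ₑ ^ 2) +
          128 * B ^ 2 * ∫⁻ ξ, min 1 (‖z‖ₑ * ‖ξ‖ₑ⁻¹) ^ 2 * ‖𝓕 f ξ‖ₑ ^ 2 := by
        gcongr
        norm_num
    _ = _ := by ring

end Multiplier

section WeightedBound

open Module (finrank)

variable {ν : Measure ℝ} [SFinite ν] {A : ℝ≥0} {α : ℝ}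

theorem lintegral_lintegral_min_sq_mul_le {X : Type*} [MeasurableSpace X] {μ : Measure X}
    [SFinite μ] (hν : ∀ ρ : ℝ≥0∞, ρ ≠ 0 → ρ ≠ ⊤ → ∫⁻ t, min 1 (‖t‖ₑ * ρ) ^ 2 ∂ν ≤ A * ρ ^ α)
    {ρ : X → ℝ≥0∞} (hρ : Measurable ρ) (hρ0 : ∀ᵐ x ∂μ, ρ x ≠ 0 ∧ ρ x ≠ ⊤) {g : X → ℝ≥0∞}
    (hg : AEMeasurable g μ) :
    ∫⁻ t, ∫⁻ x, min 1 (‖t‖ₑ * ρ x) ^ 2 * g x ∂μ ∂ν ≤ A * ∫⁻ x, ρ x ^ α * g x ∂μ := by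
  have hmeas : AEMeasurable (fun p : ℝ × X => min 1 (‖p.1‖ₑ * ρ p.2) ^ 2 * g p.2) (ν.prod μ) :=
    .mul (by fun_prop) hg.comp_snd
  rw [lintegral_lintegral_swap hmeas, ← lintegral_const_mul' _ _ (by finiteness)]
  refine lintegral_mono_ae ?_
  filter_upwards [hρ0] with x hx
  rw [lintegral_mul_const _ (by fun_prop), ← mul_assoc]
  exact mul_le_mul_left (hν _ hx.1 hx.2) _

theorem lintegral_le_of_forall_setLIntegral_ball_le {X : Type*} [PseudoMetricSpace X]
    [MeasurableSpace X] {μ : Measure X} (x₀ : X) {g : X → ℝ≥0∞} {M : ℝ≥0∞}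
    (h : ∀ R : ℝ, 0 < R → ∫⁻ x in Metric.ball x₀ R, g x ∂μ ≤ M) : ∫⁻ x, g x ∂μ ≤ M := by
  have hdir : Directed (· ⊆ ·) fun k : ℕ => Metric.ball x₀ (k + 1 : ℝ) :=
    Monotone.directed_le fun i j hij => Metric.ball_subset_ball (by gcongr)
  rw [← setLIntegral_univ, ← Metric.iUnion_ball_nat_succ x₀, setLIntegral_iUnion_of_directed _ hdir]
  exact iSup_le fun k => h _ (by positivity)

variable {E : Type*} [NormedAddCommGroup E] [InnerProductSpace ℝ E] [FiniteDimensional ℝ E]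
  [MeasurableSpace E] [BorelSpace E] {q : E → ℂ} {B : ℝ≥0} {f : E → ℂ}

theorem IsMikhlinSymbol.lintegral_lintegral_phaseDiff_sq_mul_le (hq : IsMikhlinSymbol q B)
    (hν : ∀ ρ : ℝ≥0∞, ρ ≠ 0 → ρ ≠ ⊤ → ∫⁻ t, min 1 (‖t‖ₑ * ρ) ^ 2 ∂ν ≤ A * ρ ^ α)
    (hf : Integrable f) {e : E} (he : ‖e‖ = 1) :
    ∫⁻ x, (∫⁻ t, ‖phaseDiff (t * ⟪x, e⟫)‖ₑ ^ 2 ∂ν) * ‖fourierMultiplier q f x‖ₑ ^ 2 ≤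
      128 * B ^ 2 * (A * (∫⁻ x, ‖x‖ₑ ^ α * ‖f x‖ₑ ^ 2) +
        A * ∫⁻ ξ, ‖ξ‖ₑ ^ (-α) * ‖𝓕 f ξ‖ₑ ^ 2) := by
  have : Nontrivial E := ⟨e, 0, by rintro rfl; simp at he⟩
  have hu := (continuous_fourierMultiplier q f).measurable
  have hphase := continuous_phaseDiff.measurable
  have hFf := (continuous_fourier_of_integrable hf).measurable
  have hf2 : AEMeasurable (fun x => ‖f x‖ₑ ^ 2) := hf.aestronglyMeasurable.enorm.pow_const 2
  have hne : ∀ᵐ x : E, x ≠ 0 := Measure.ae_ne volume 0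
  calc ∫⁻ x, (∫⁻ t, ‖phaseDiff (t * ⟪x, e⟫)‖ₑ ^ 2 ∂ν) * ‖fourierMultiplier q f x‖ₑ ^ 2
      = ∫⁻ t, (∫⁻ x, ‖phaseDiff ⟪x, t • e⟫ * fourierMultiplier q f x‖ₑ ^ 2) ∂ν := by
        simp_rw [enorm_mul, mul_pow, real_inner_smul_right]
        rw [lintegral_lintegral_swap (by fun_prop)]
        exact lintegral_congr fun x => (lintegral_mul_const _ (by fun_prop)).symm
    _ ≤ ∫⁻ t, 128 * B ^ 2 * ((∫⁻ x, min 1 (‖t‖ₑ * ‖x‖ₑ) ^ 2 * ‖f x‖ₑ ^ 2) +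
          ∫⁻ ξ, min 1 (‖t‖ₑ * ‖ξ‖ₑ⁻¹) ^ 2 * ‖𝓕 f ξ‖ₑ ^ 2) ∂ν := by
        refine lintegral_mono fun t => ?_
        have h := hq.lintegral_enorm_phaseDiff_mul_fourierMultiplier_sq_le hf (t • e)
        rwa [enorm_smul, ← enorm_norm e, he, enorm_one, mul_one] at h
    _ ≤ _ := by
        rw [lintegral_const_mul' _ _ (by finiteness), lintegral_add_right _ (by fun_prop)]
        gcongr
        · exact lintegral_lintegral_min_sq_mul_le hν (by fun_prop)
            (hne.mono fun x hx => by simpa) hf2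
        · simp_rw [ENNReal.rpow_neg, ← ENNReal.inv_rpow]
          exact lintegral_lintegral_min_sq_mul_le hν (by fun_prop)
            (hne.mono fun x hx => by simpa) (by fun_prop)

theorem IsMikhlinSymbol.exists_lintegral_inner_rpow_mul_fourierMultiplier_sq_le
    (hq : IsMikhlinSymbol q B) (hα0 : 0 < α) (hα2 : α ≤ 2) (hαd : α < finrank ℝ E) :
    ∃ C : ℝ≥0, ∀ f : E → ℂ, Integrable f → ∀ e : E, ‖e‖ = 1 →
      ∫⁻ x, ‖⟪x, e⟫‖ₑ ^ α * ‖fourierMultiplier q f x‖ₑ ^ 2 ≤ C * ∫⁻ x, ‖x‖ₑ ^ α * ‖f x‖ₑ ^ 2 := by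
  obtain ⟨A, hA⟩ := exists_measure_rpow_comparison hα0 hα2
  obtain ⟨P, hP⟩ := exists_lintegral_rpow_neg_mul_enorm_fourier_sq_le hα0 hαd
  refine ⟨A * (128 * B ^ 2 * (A + A * P)), fun f hf e he =>
    lintegral_le_of_forall_setLIntegral_ball_le 0 fun R hR => ?_⟩
  obtain ⟨ν, _, hν, hlower⟩ := hA R hR
  calc ∫⁻ x in Metric.ball 0 R, ‖⟪x, e⟫‖ₑ ^ α * ‖fourierMultiplier q f x‖ₑ ^ 2
      ≤ ∫⁻ x in Metric.ball 0 R, A * ((∫⁻ t, ‖phaseDiff (t * ⟪x, e⟫)‖ₑ ^ 2 ∂ν) *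
          ‖fourierMultiplier q f x‖ₑ ^ 2) := by
        refine setLIntegral_mono' Metric.isOpen_ball.measurableSet fun x hx => ?_
        rw [← mul_assoc]
        gcongr
        refine hlower _ ((abs_real_inner_le_norm x e).trans ?_)
        rw [he, mul_one]
        exact (mem_ball_zero_iff.1 hx).le
    _ ≤ A * (128 * B ^ 2 * (A * (∫⁻ x, ‖x‖ₑ ^ α * ‖f x‖ₑ ^ 2) +
          A * (P * ∫⁻ x, ‖x‖ₑ ^ α * ‖f x‖ₑ ^ 2))) := by
        rw [lintegral_const_mul' _ _ (by finiteness)]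
        gcongr A * ?_
        refine (setLIntegral_le_lintegral _ _).trans
          ((hq.lintegral_lintegral_phaseDiff_sq_mul_le hν hf he).trans ?_)
        gcongr
        exact hP f hf
    _ = _ := by push_cast; ring

theorem enorm_rpow_le_sum_enorm_inner_rpow {ι F : Type*} [Fintype ι] [NormedAddCommGroup F]
    [InnerProductSpace ℝ F] (b : OrthonormalBasis ι ℝ F) (hα0 : 0 < α) (hα2 : α ≤ 2) (x : F) :
    ‖x‖ₑ ^ α ≤ ∑ i, ‖⟪x, b i⟫‖ₑ ^ α := by
  have hsq : ‖x‖ₑ ^ 2 = ∑ i, ‖⟪x, b i⟫‖ₑ ^ 2 := by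
    simp_rw [← ofReal_norm, ← ENNReal.ofReal_pow (norm_nonneg _)]
    rw [← b.sum_sq_norm_inner_left x, ENNReal.ofReal_sum_of_nonneg fun _ _ => by positivity]
  have hpow (a : ℝ≥0∞) : (a ^ 2) ^ (α / 2) = a ^ α := by
    rw [← ENNReal.rpow_two, ← ENNReal.rpow_mul]
    ring_nf
  calc ‖x‖ₑ ^ α = (∑ i, ‖⟪x, b i⟫‖ₑ ^ 2) ^ (α / 2) := by rw [← hsq, hpow]
    _ ≤ ∑ i, (‖⟪x, b i⟫‖ₑ ^ 2) ^ (α / 2) :=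
        Finset.le_sum_of_subadditive (fun a : ℝ≥0∞ => a ^ (α / 2)) (by simp [hα0])
          (fun a c => ENNReal.rpow_add_le_add_rpow a c (by linarith) (by linarith)) _ _
    _ = ∑ i, ‖⟪x, b i⟫‖ₑ ^ α := by simp_rw [hpow]

theorem IsMikhlinSymbol.exists_lintegral_rpow_mul_fourierMultiplier_sq_le
    (hq : IsMikhlinSymbol q B) (hα0 : 0 < α) (hα2 : α ≤ 2) (hαd : α < finrank ℝ E) :
    ∃ C : ℝ≥0, ∀ f : E → ℂ, Integrable f →
      ∫⁻ x, ‖x‖ₑ ^ α * ‖fourierMultiplier q f x‖ₑ ^ 2 ≤ C * ∫⁻ x, ‖x‖ₑ ^ α * ‖f x‖ₑ ^ 2 := by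
  obtain ⟨C, hC⟩ := hq.exists_lintegral_inner_rpow_mul_fourierMultiplier_sq_le hα0 hα2 hαd
  let b := stdOrthonormalBasis ℝ E
  refine ⟨finrank ℝ E * C, fun f hf => ?_⟩
  have hu := (continuous_fourierMultiplier q f).measurable
  calc ∫⁻ x, ‖x‖ₑ ^ α * ‖fourierMultiplier q f x‖ₑ ^ 2
      ≤ ∫⁻ x, ∑ i, ‖⟪x, b i⟫‖ₑ ^ α * ‖fourierMultiplier q f x‖ₑ ^ 2 := by
        refine lintegral_mono fun x => ?_
        rw [← Finset.sum_mul]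
        gcongr
        exact enorm_rpow_le_sum_enorm_inner_rpow b hα0 hα2 x
    _ = ∑ i, ∫⁻ x, ‖⟪x, b i⟫‖ₑ ^ α * ‖fourierMultiplier q f x‖ₑ ^ 2 :=
        lintegral_finsetSum _ fun i _ => by fun_prop
    _ ≤ ∑ _i : Fin (finrank ℝ E), C * ∫⁻ x, ‖x‖ₑ ^ α * ‖f x‖ₑ ^ 2 :=
        Finset.sum_le_sum fun i _ => hC f hf (b i) (b.norm_eq_one i)
    _ = _ := by simp [mul_assoc]

end WeightedBound

section Commutator

variable {E : Type*} [NormedAddCommGroup E]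

theorem enorm_norm_rpow_mul (x : E) {δ : ℝ} (hδ : 0 ≤ δ) (w : ℂ) :
    ‖((‖x‖ ^ δ : ℝ) : ℂ) * w‖ₑ = ‖x‖ₑ ^ δ * ‖w‖ₑ := by
  rw [enorm_mul, ← ofReal_norm, norm_real, Real.norm_rpow_of_nonneg (norm_nonneg x), norm_norm,
    ← ENNReal.ofReal_rpow_of_nonneg (norm_nonneg x) hδ, ofReal_norm]

variable [MeasurableSpace E] {μ : Measure E}

theorem eLpNorm_norm_rpow_mul_two_sq {δ : ℝ} (hδ : 0 ≤ δ) (g : E → ℂ) :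
    eLpNorm (fun x => ((‖x‖ ^ δ : ℝ) : ℂ) * g x) 2 μ ^ 2 =
      ∫⁻ x, ‖x‖ₑ ^ (2 * δ) * ‖g x‖ₑ ^ 2 ∂μ := by
  rw [eLpNorm_two_sq]
  refine lintegral_congr fun x => ?_
  rw [enorm_norm_rpow_mul x hδ, mul_pow, ← ENNReal.rpow_mul_natCast, mul_comm δ, Nat.cast_ofNat]

variable [InnerProductSpace ℝ E] [FiniteDimensional ℝ E] [BorelSpace E] {q : E → ℂ} {B : ℝ≥0}

theorem IsMikhlinSymbol.exists_eLpNorm_norm_rpow_mul_fourierMultiplier_le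
    (hq : IsMikhlinSymbol q B) {δ : ℝ} (hδ0 : 0 < δ) (hδ1 : δ ≤ 1)
    (hδd : 2 * δ < Module.finrank ℝ E) :
    ∃ C : ℝ≥0, ∀ f : E → ℂ, Integrable f →
      eLpNorm (fun x => ((‖x‖ ^ δ : ℝ) : ℂ) * fourierMultiplier q f x) 2 volume ≤
        C * eLpNorm (fun x => ((‖x‖ ^ δ : ℝ) : ℂ) * f x) 2 volume := by
  obtain ⟨C, hC⟩ := hq.exists_lintegral_rpow_mul_fourierMultiplier_sq_le (α := 2 * δ)
    (by linarith) (by linarith) hδd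
  refine ⟨NNReal.sqrt C, fun f hf => ?_⟩
  rw [← ENNReal.pow_le_pow_left_iff two_ne_zero, mul_pow, eLpNorm_norm_rpow_mul_two_sq hδ0.le,
    eLpNorm_norm_rpow_mul_two_sq hδ0.le, ← ENNReal.coe_pow, NNReal.sq_sqrt]
  exact hC f hf

theorem IsMikhlinSymbol.eLpNorm_fourierMultiplier_two_le (hq : IsMikhlinSymbol q B) (f : E → ℂ) :
    eLpNorm (fourierMultiplier q f) 2 volume ≤ B * eLpNorm f 2 volume := by
  rw [← ENNReal.pow_le_pow_left_iff two_ne_zero, mul_pow, eLpNorm_two_sq, eLpNorm_two_sq]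
  exact hq.lintegral_enorm_fourierMultiplier_sq_le f

theorem IsMikhlinSymbol.exists_eLpNorm_commutator_le (hq : IsMikhlinSymbol q B) {δ : ℝ}
    (hδ0 : 0 < δ) (hδ1 : δ ≤ 1) (hδd : 2 * δ < Module.finrank ℝ E) :
    ∃ C > 0, ∀ f : SchwartzMap E ℂ,
      eLpNorm (fun x => ((‖x‖ ^ δ : ℝ) : ℂ) * fourierMultiplier q f x -
          fourierMultiplier q (fun y => ((‖y‖ ^ δ : ℝ) : ℂ) * f y) x) 2 volume ≤
        ENNReal.ofReal C * eLpNorm (fun x => ((‖x‖ ^ δ : ℝ) : ℂ) * f x) 2 volume := by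
  obtain ⟨C, hC⟩ := hq.exists_eLpNorm_norm_rpow_mul_fourierMultiplier_le hδ0 hδ1 hδd
  refine ⟨C + B + 1, by positivity, fun f => ?_⟩
  have hu := continuous_fourierMultiplier q f
  have hweight : Continuous fun x : E => ((‖x‖ ^ δ : ℝ) : ℂ) :=
    continuous_ofReal.comp (continuous_norm.rpow_const fun _ => .inr hδ0.le)
  refine (eLpNorm_sub_le (hweight.mul hu).aestronglyMeasurable
    (continuous_fourierMultiplier q _).aestronglyMeasurable one_le_two).trans ?_
  calc _ ≤ C * eLpNorm (fun x => ((‖x‖ ^ δ : ℝ) : ℂ) * f x) 2 volume +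
        B * eLpNorm (fun x => ((‖x‖ ^ δ : ℝ) : ℂ) * f x) 2 volume :=
        add_le_add (hC f f.integrable) (hq.eLpNorm_fourierMultiplier_two_le _)
    _ ≤ _ := by
        rw [← add_mul, ← ENNReal.coe_add, ← ENNReal.ofReal_coe_nnreal, NNReal.coe_add]
        exact mul_le_mul_left (ENNReal.ofReal_le_ofReal (by linarith)) _

end Commutator

section Homogeneous

variable {E : Type*} [NormedAddCommGroup E] [NormedSpace ℝ E] {q : E → ℂ}

theorem IsMikhlinSymbol.comp_smul {B : ℝ≥0} (hq : IsMikhlinSymbol q B) {r : ℝ} (hr : r ≠ 0) :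
    IsMikhlinSymbol (fun ξ => q (r • ξ)) B where
  enorm_le ξ := hq.enorm_le _
  enorm_mul_enorm_sub_le ξ η := by
    have h := hq.enorm_mul_enorm_sub_le (r • ξ) (r • η)
    rw [← smul_sub, enorm_smul, enorm_smul, mul_assoc, mul_left_comm (B : ℝ≥0∞)] at h
    exact (ENNReal.mul_le_mul_iff_right (enorm_ne_zero.2 hr) enorm_ne_top).1 h

variable [FiniteDimensional ℝ E]

theorem exists_norm_le_of_homogeneous (hq : ContinuousOn q {(0 : E)}ᶜ)
    (hhom : ∀ t : ℝ, 0 < t → ∀ ξ, q (t • ξ) = q ξ) : ∃ M : ℝ, ∀ ξ, ‖q ξ‖ ≤ M := by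
  have : ProperSpace E := FiniteDimensional.proper_real E
  have hsphere : Metric.sphere (0 : E) 1 ⊆ {0}ᶜ :=
    fun ξ hξ => Metric.ne_of_mem_sphere hξ one_ne_zero
  obtain ⟨M, hM⟩ := (isCompact_sphere (0 : E) 1).exists_bound_of_continuousOn (hq.mono hsphere)
  refine ⟨max M ‖q 0‖, fun ξ => ?_⟩
  rcases eq_or_ne ξ 0 with rfl | hξ
  · exact le_max_right _ _
  · rw [← hhom ‖ξ‖⁻¹ (by positivity) ξ]
    exact (hM _ (by simp [norm_smul, hξ])).trans (le_max_left _ _)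

theorem exists_norm_add_sub_le_of_norm_eq_one (hq : ContDiffOn ℝ 1 q {(0 : E)}ᶜ) :
    ∃ L : ℝ, ∀ ξ z : E, ‖ξ‖ = 1 → ‖z‖ < 1 / 2 → ‖q (ξ + z) - q ξ‖ ≤ L * ‖z‖ := by
  have : ProperSpace E := FiniteDimensional.proper_real E
  have hopen : IsOpen {(0 : E)}ᶜ := isOpen_compl_singleton
  let A : Set E := Metric.closedBall 0 2 ∩ (Metric.ball 0 (1 / 2))ᶜ
  have hA0 : A ⊆ {0}ᶜ := by
    rintro ξ ⟨-, hξ⟩ rfl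
    exact hξ (Metric.mem_ball_self (by norm_num))
  have hA : IsCompact A := (isCompact_closedBall _ _).inter_right Metric.isOpen_ball.isClosed_compl
  obtain ⟨L, hL⟩ := hA.exists_bound_of_continuousOn
    ((hq.continuousOn_fderiv_of_isOpen hopen le_rfl).mono hA0)
  refine ⟨L, fun ξ z hξ hz => ?_⟩
  have hball : Metric.ball ξ (1 / 2) ⊆ A := by
    intro y hy
    rw [mem_ball_iff_norm] at hy
    refine ⟨mem_closedBall_zero_iff.2 ?_, fun hy' => ?_⟩
    · linarith [norm_sub_norm_le y ξ]
    · linarith [norm_sub_norm_le ξ y, norm_sub_rev y ξ, mem_ball_zero_iff.1 hy']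
  simpa using (convex_ball ξ (1 / 2)).norm_image_sub_le_of_norm_fderiv_le
    (fun y hy => (hq.contDiffAt (hopen.mem_nhds (hA0 (hball hy)))).differentiableAt one_ne_zero)
    (fun y hy => hL y (hball hy)) (Metric.mem_ball_self (by norm_num))
    (show ξ + z ∈ Metric.ball ξ (1 / 2) by simpa using hz)

theorem exists_norm_mul_norm_sub_le_of_homogeneous (hq : ContDiffOn ℝ 1 q {(0 : E)}ᶜ)
    (hhom : ∀ t : ℝ, 0 < t → ∀ ξ, q (t • ξ) = q ξ) :
    ∃ K : ℝ, ∀ ξ η, ‖ξ‖ * ‖q η - q ξ‖ ≤ K * ‖η - ξ‖ := by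
  obtain ⟨M, hM⟩ := exists_norm_le_of_homogeneous hq.continuousOn hhom
  obtain ⟨L, hL⟩ := exists_norm_add_sub_le_of_norm_eq_one hq
  refine ⟨max L (4 * M), fun ξ η => ?_⟩
  rcases eq_or_ne ξ 0 with rfl | hξ
  · have := (norm_nonneg _).trans (hM 0)
    simp only [norm_zero, zero_mul]
    positivity
  have hξ0 : 0 < ‖ξ‖ := norm_pos_iff.2 hξ
  rcases lt_or_ge ‖η - ξ‖ (‖ξ‖ / 2) with hnear | hfar
  · have h := hL (‖ξ‖⁻¹ • ξ) (‖ξ‖⁻¹ • (η - ξ)) (by simp [norm_smul, hξ]) (by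
      rw [norm_smul, norm_inv, norm_norm, inv_mul_lt_iff₀ hξ0]
      linarith)
    rw [← smul_add, add_sub_cancel, hhom _ (by positivity), hhom _ (by positivity), norm_smul,
      norm_inv, norm_norm] at h
    calc ‖ξ‖ * ‖q η - q ξ‖ ≤ ‖ξ‖ * (L * (‖ξ‖⁻¹ * ‖η - ξ‖)) := by gcongr
      _ = L * ‖η - ξ‖ := by field_simp
      _ ≤ _ := by gcongr; exact le_max_left _ _
  · calc ‖ξ‖ * ‖q η - q ξ‖ ≤ (2 * ‖η - ξ‖) * (M + M) := by
          gcongr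
          · linarith
          · exact (norm_sub_le _ _).trans (add_le_add (hM η) (hM ξ))
      _ = 4 * M * ‖η - ξ‖ := by ring
      _ ≤ _ := by gcongr; exact le_max_right _ _

theorem exists_isMikhlinSymbol_of_homogeneous (hq : ContDiffOn ℝ 1 q {(0 : E)}ᶜ)
    (hhom : ∀ t : ℝ, 0 < t → ∀ ξ, q (t • ξ) = q ξ) : ∃ B : ℝ≥0, IsMikhlinSymbol q B := by
  obtain ⟨M, hM⟩ := exists_norm_le_of_homogeneous hq.continuousOn hhom
  obtain ⟨K, hK⟩ := exists_norm_mul_norm_sub_le_of_homogeneous hq hhom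
  refine ⟨(max M K).toNNReal, fun ξ => ?_, fun ξ η => ?_⟩
  · rw [← ofReal_norm]
    exact ENNReal.ofReal_le_ofReal ((hM ξ).trans (le_max_left _ _))
  · simp only [← ofReal_norm]
    rw [← ENNReal.ofReal_mul (norm_nonneg _), ← ENNReal.ofReal,
      ← ENNReal.ofReal_mul' (norm_nonneg _)]
    refine ENNReal.ofReal_le_ofReal ((hK ξ η).trans ?_)
    gcongr
    exact le_max_right _ _

end Homogeneous

section Normalization

variable {n : ℕ}

theorem FT_two_pi_smul (f : EuclideanSpace ℝ (Fin n) → ℂ) (ξ : EuclideanSpace ℝ (Fin n)) :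
    FT n f ((2 * π) • ξ) = ((2 * π) ^ (-(n : ℝ) / 2) : ℝ) • 𝓕 f ξ := by
  rw [FT, Real.fourier_eq']
  congr 2 with x
  rw [smul_eq_mul, inner_smul_right]
  push_cast
  ring_nf

theorem IFT_eq_fourierInv (F : EuclideanSpace ℝ (Fin n) → ℂ) (x : EuclideanSpace ℝ (Fin n)) :
    IFT n F x = ((2 * π) ^ ((n : ℝ) / 2) : ℝ) • 𝓕⁻ (fun ξ => F ((2 * π) • ξ)) x := by
  have hscale : ∫ ξ, Complex.exp (Complex.I * ((⟪x, ξ⟫ : ℝ) : ℂ)) * F ξ =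
      ((2 * π) ^ n : ℝ) • 𝓕⁻ (fun ξ => F ((2 * π) • ξ)) x := by
    have h := Measure.integral_comp_smul (volume : Measure (EuclideanSpace ℝ (Fin n)))
      (fun ξ => Complex.exp (Complex.I * ((⟪x, ξ⟫ : ℝ) : ℂ)) * F ξ) (2 * π)
    rw [finrank_euclideanSpace_fin, abs_of_pos (by positivity),
      eq_inv_smul_iff₀ (by positivity)] at h
    rw [← h, Real.fourierInv_eq']
    congr 2 with ξ
    rw [smul_eq_mul, inner_smul_right, real_inner_comm]
    push_cast
    ring_nf
  rw [IFT, hscale, smul_smul, ← Real.rpow_natCast, ← Real.rpow_add (by positivity)]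
  congr 2
  ring

theorem mult_eq_fourierMultiplier (q f : EuclideanSpace ℝ (Fin n) → ℂ) :
    mult n q f = fourierMultiplier (fun ξ => q ((2 * π) • ξ)) f := by
  ext x
  rw [mult, IFT_eq_fourierInv, fourierMultiplier]
  simp only [FT_two_pi_smul, mul_smul_comm]
  rw [Real.fourierInv_eq, Real.fourierInv_eq, ← integral_smul]
  congr 1 with ξ
  rw [smul_comm, smul_smul, neg_div, Real.rpow_neg (by positivity),
    mul_inv_cancel₀ (by positivity), one_smul]

theorem commutator_weight_multiplier_general {δ : ℝ} (hδ0 : 0 < δ) (hδ1 : δ ≤ 1)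
    (hδn : 2 * δ < n) {q : EuclideanSpace ℝ (Fin n) → ℂ} {B : ℝ≥0} (hq : IsMikhlinSymbol q B) :
    ∃ C > 0, ∀ f : SchwartzMap (EuclideanSpace ℝ (Fin n)) ℂ,
      eLpNorm (fun x => ((‖x‖ ^ δ : ℝ) : ℂ) * mult n q f x -
          mult n q (fun y => ((‖y‖ ^ δ : ℝ) : ℂ) * f y) x) 2 volume ≤
        ENNReal.ofReal C * eLpNorm (fun x => ((‖x‖ ^ δ : ℝ) : ℂ) * f x) 2 volume := by
  simp only [mult_eq_fourierMultiplier]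
  exact (hq.comp_smul two_pi_pos.ne').exists_eLpNorm_commutator_le hδ0 hδ1 (by simpa using hδn)

end Normalization

theorem commutator_weight_multiplier (n : ℕ) (hn : 2 ≤ n) (δ : ℝ) (hδ0 : 0 < δ)
    (hδ1 : 3 ≤ n → δ ≤ 1) (hδ2 : n = 2 → δ < 1)
    (q : EuclideanSpace ℝ (Fin n) → ℂ)
    (hq_smooth : ContDiffOn ℝ (⊤ : ℕ∞) q {(0 : EuclideanSpace ℝ (Fin n))}ᶜ)
    (hq_hom : ∀ t : ℝ, 0 < t → ∀ ξ, q (t • ξ) = q ξ) :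
    ∃ C > 0, ∀ f : SchwartzMap (EuclideanSpace ℝ (Fin n)) ℂ,
      eLpNorm (fun x : EuclideanSpace ℝ (Fin n) =>
          ((‖x‖ ^ δ : ℝ) : ℂ) * mult n q (fun y => f y) x -
            mult n q (fun y => ((‖y‖ ^ δ : ℝ) : ℂ) * f y) x) 2 volume
        ≤ ENNReal.ofReal C *
            eLpNorm (fun x : EuclideanSpace ℝ (Fin n) => ((‖x‖ ^ δ : ℝ) : ℂ) * f x) 2 volume := by
  obtain ⟨B, hB⟩ := exists_isMikhlinSymbol_of_homogeneous (hq_smooth.of_le (by simp)) hq_hom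
  have hδ : δ ≤ 1 ∧ 2 * δ < n := by
    rcases hn.eq_or_lt with rfl | hn3
    · exact ⟨(hδ2 rfl).le, by push_cast; linarith [hδ2 rfl]⟩
    · have hn3' : (3 : ℝ) ≤ n := mod_cast hn3
      exact ⟨hδ1 hn3, by linarith [hδ1 hn3]⟩
  exact commutator_weight_multiplier_general hδ0 hδ.1 hδ.2 hB
end
end
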